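/- arXiv:1812.10279 — 2 statements merged into one kernel-verified Lean document; each statement's English description precedes it below -/
import Mathlib

section
/- For any P⁻ > 0, γ ≥ 1 and μ, k > 0, there exists ε > 0 with the following property: if s > 0, P⁺ > 0, |P⁺ − P⁻| < ε and P⁺ < P⁻ (respectively, if s < 0, |P⁺ − P⁻| < ε and P⁻ < P⁺), then there exists a heteroclinic solution of the planar profile system P' = Q, Q' = (2/k²)f(P) − (2μs/k²)Q + Q²/P connecting (P⁻, 0) to (P⁺, 0), i.e. a C¹ solution (P, Q) : ℝ → (0,∞) × ℝ defined for all y ∈ ℝ with (P(y), Q(y)) → (P⁻, 0) as y → −∞ and (P(y), Q(y)) → (P⁺, 0) as y → +∞. -/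
open Filter Topology

/-- The nonlinearity of the traveling-wave (profile) equation of the viscous QHD system,
with end states `Pm = P⁻`, `Pp = P⁺` and pressure exponent `γ`. -/
noncomputable def profileF (γ Pm Pp P : ℝ) : ℝ :=
  P ^ γ + Pm * Pp / P * ((Pp ^ γ - Pm ^ γ) / (Pp - Pm))
    - (Pp ^ (γ + 1) - Pm ^ (γ + 1)) / (Pp - Pm)

open Set MeasureTheory
open scoped NNReal BoundedContinuousFunction

/-!
In the variables `u = log P`, `w = Q / P` the profile system is the damped oscillator
`u' = w`, `w' = g u - c w` with `g u = (2 / k ^ 2) f(exp u) exp (-u)` and `c = 2 μ s / k ^ 2`.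
Reversing time if necessary, let `c > 0`. Since `P * f P` is strictly convex and vanishes exactly at
the end states `a < b`, the potential of `g` has a minimum at `log a` and a maximum at `log b`, and
it tends to `+∞` at `-∞`: the energy, which decreases along orbits, confines to the well every orbit
that enters it below the level of `log b`, and by a LaSalle argument such orbits converge to
`log a`. The orbit emanating from the saddle `(log b, 0)` is obtained by compactness, without a
stable manifold theorem: orbits released at rest ever closer to `log b` take ever longer to reach
a given position `p` in the well, and the backward orbits from their hitting states accumulate at an
orbit which stays between `p` and `log b` for all negative times.
-/

section LipschitzFlow

variable {E : Type*} [NormedAddCommGroup E] [NormedSpace ℝ E] {v : E → E} {K : ℝ≥0}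

lemma norm_intervalIntegral_zero_le_of_norm_le_exp_abs {f : ℝ → E} {M r : ℝ} (hr : 0 < r)
    (hf : ∀ s, ‖f s‖ ≤ M * Real.exp (r * |s|)) (t : ℝ) :
    ‖∫ s in 0..t, f s‖ ≤ M / r * Real.exp (r * |t|) := by
  have hM : 0 ≤ M := by simpa using (norm_nonneg _).trans (hf 0)
  have of_nonneg : ∀ {f : ℝ → E}, (∀ s, ‖f s‖ ≤ M * Real.exp (r * |s|)) → ∀ {t : ℝ}, 0 ≤ t →
      ‖∫ s in 0..t, f s‖ ≤ M / r * Real.exp (r * |t|) := fun {f} hf t ht => calc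
    ‖∫ s in 0..t, f s‖ ≤ ∫ s in 0..t, M * Real.exp (r * s) :=
      intervalIntegral.norm_integral_le_of_norm_le ht
        (ae_of_all _ fun s hs => by simpa only [abs_of_pos hs.1] using hf s)
        (Continuous.intervalIntegrable (by fun_prop) _ _)
    _ = M / r * (Real.exp (r * t) - 1) := by
      rw [intervalIntegral.integral_const_mul, intervalIntegral.integral_comp_mul_left _ hr.ne',
        integral_exp, mul_zero, Real.exp_zero, smul_eq_mul]
      ring
    _ ≤ M / r * Real.exp (r * |t|) := by
      rw [abs_of_nonneg ht]
      gcongr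
      exact sub_le_self _ zero_le_one
  rcases le_total 0 t with ht | ht
  · exact of_nonneg hf ht
  · have h := of_nonneg (f := fun s => f (-s)) (fun s => by simpa using hf (-s))
      (neg_nonneg.2 ht)
    rwa [intervalIntegral.integral_comp_neg, neg_neg, neg_zero, intervalIntegral.integral_symm,
      norm_neg, abs_neg] at h

lemma norm_exp_neg_smul_intervalIntegral_le {f : ℝ → E} {M r : ℝ} (hr : 0 < r)
    (hf : ∀ s, ‖f s‖ ≤ M * Real.exp (r * |s|)) (t : ℝ) :
    ‖Real.exp (-(r * |t|)) • ∫ s in 0..t, f s‖ ≤ M / r := by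
  rw [norm_smul, Real.norm_of_nonneg (Real.exp_pos _).le, Real.exp_neg,
    inv_mul_le_iff₀ (Real.exp_pos _), mul_comm]
  exact norm_intervalIntegral_zero_le_of_norm_le_exp_abs hr hf t

lemma norm_apply_exp_smul_le (hv : LipschitzWith K v) (y : ℝ →ᵇ E) {r : ℝ}
    (hr : 0 ≤ r) (s : ℝ) :
    ‖v (Real.exp (r * |s|) • y s)‖ ≤ (‖v 0‖ + K * ‖y‖) * Real.exp (r * |s|) := by
  have hone : 1 ≤ Real.exp (r * |s|) := Real.one_le_exp (by positivity)
  calc ‖v (Real.exp (r * |s|) • y s)‖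
      ≤ ‖v 0‖ + ‖v (Real.exp (r * |s|) • y s) - v 0‖ := norm_le_norm_add_norm_sub' _ _
    _ ≤ ‖v 0‖ * Real.exp (r * |s|) + K * (Real.exp (r * |s|) * ‖y‖) := by
      refine add_le_add (le_mul_of_one_le_right (norm_nonneg _) hone)
        ((hv.norm_sub_le _ _).trans ?_)
      rw [sub_zero, norm_smul, Real.norm_of_nonneg (Real.exp_pos _).le]
      gcongr
      exact y.norm_coe_le_norm s
    _ = (‖v 0‖ + K * ‖y‖) * Real.exp (r * |s|) := by ring

/-- The Picard operator of `z' = v z`, `z 0 = x₀`, conjugated by the weight `exp (r |t|)` and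
acting on bounded continuous functions. For `r` larger than the Lipschitz constant of `v` it is a
contraction, whose fixed point `y` gives the global solution `t ↦ exp (r |t|) • y t`. -/
noncomputable def weightedPicard (hv : LipschitzWith K v) (x₀ : E) {r : ℝ} (hr : 0 < r)
    (y : ℝ →ᵇ E) : ℝ →ᵇ E :=
  BoundedContinuousFunction.ofNormedAddCommGroup
    (fun t => Real.exp (-(r * |t|)) • (x₀ + ∫ s in 0..t, v (Real.exp (r * |s|) • y s)))
    (by
      have hint : Continuous fun s => v (Real.exp (r * |s|) • y s) :=
        hv.continuous.comp (by fun_prop)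
      exact Continuous.smul (by fun_prop) (continuous_const.add
        (intervalIntegral.continuous_primitive (fun a b => hint.intervalIntegrable a b) 0)))
    (‖x₀‖ + (‖v 0‖ + K * ‖y‖) / r) fun t => by
      rw [smul_add]
      refine norm_add_le_of_le ?_ (norm_exp_neg_smul_intervalIntegral_le hr
        (norm_apply_exp_smul_le hv y hr.le) t)
      rw [norm_smul, Real.norm_of_nonneg (Real.exp_pos _).le]
      exact mul_le_of_le_one_left (norm_nonneg _)
        (Real.exp_le_one_iff.2 (neg_nonpos.2 (by positivity)))

lemma weightedPicard_apply (hv : LipschitzWith K v) (x₀ : E) {r : ℝ} (hr : 0 < r) (y : ℝ →ᵇ E)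
    (t : ℝ) : weightedPicard hv x₀ hr y t =
      Real.exp (-(r * |t|)) • (x₀ + ∫ s in 0..t, v (Real.exp (r * |s|) • y s)) := rfl

lemma lipschitzWith_weightedPicard (hv : LipschitzWith K v) (x₀ : E) {r : ℝ≥0} (hr : 0 < r) :
    LipschitzWith (K / r) (weightedPicard hv x₀ (NNReal.coe_pos.2 hr)) := by
  refine LipschitzWith.of_dist_le_mul fun y w => ?_
  refine (BoundedContinuousFunction.dist_le (by positivity)).2 fun t => ?_
  have hint : ∀ y : ℝ →ᵇ E, Continuous fun s => v (Real.exp (r * |s|) • y s) := fun y =>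
    hv.continuous.comp (by fun_prop)
  have hdiff : ∀ s, ‖v (Real.exp (r * |s|) • y s) - v (Real.exp (r * |s|) • w s)‖
      ≤ K * dist y w * Real.exp (r * |s|) := fun s => calc
    _ ≤ K * (Real.exp (r * |s|) * dist (y s) (w s)) := by
      refine (hv.norm_sub_le _ _).trans_eq ?_
      rw [← smul_sub, norm_smul, Real.norm_of_nonneg (Real.exp_pos _).le, dist_eq_norm]
    _ ≤ K * (Real.exp (r * |s|) * dist y w) := by
      gcongr
      exact BoundedContinuousFunction.dist_coe_le_dist s
    _ = _ := by ring
  rw [weightedPicard_apply, weightedPicard_apply, dist_eq_norm, ← smul_sub, add_sub_add_left_eq_sub,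
    ← intervalIntegral.integral_sub ((hint y).intervalIntegrable _ _)
      ((hint w).intervalIntegrable _ _)]
  exact (norm_exp_neg_smul_intervalIntegral_le (NNReal.coe_pos.2 hr) hdiff t).trans_eq
    (by rw [NNReal.coe_div, mul_div_right_comm])

theorem exists_isIntegralCurve_of_lipschitzWith [CompleteSpace E] (hv : LipschitzWith K v)
    (x₀ : E) : ∃ z : ℝ → E, z 0 = x₀ ∧ IsIntegralCurve z fun _ => v := by
  have hr : 0 < K + 1 := by positivity
  have hcontr : ContractingWith (K / (K + 1)) (weightedPicard hv x₀ (NNReal.coe_pos.2 hr)) :=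
    ⟨NNReal.div_lt_one_of_lt (lt_add_one K), lipschitzWith_weightedPicard hv x₀ hr⟩
  set y := hcontr.fixedPoint
  set z : ℝ → E := fun t => Real.exp (↑(K + 1) * |t|) • y t
  have hz : ∀ t, z t = x₀ + ∫ s in 0..t, v (z s) := fun t => by
    have hfix : y t = weightedPicard hv x₀ (NNReal.coe_pos.2 hr) y t :=
      congrArg (fun u : ℝ →ᵇ E => u t) hcontr.fixedPoint_isFixedPt.symm
    rw [weightedPicard_apply] at hfix
    change Real.exp _ • y t = _
    rw [hfix, smul_smul, ← Real.exp_add, add_neg_cancel, Real.exp_zero, one_smul]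
  have hcont : Continuous fun s => v (z s) := hv.continuous.comp (by fun_prop)
  refine ⟨z, by simpa using hz 0, fun t => ?_⟩
  have hderiv := (intervalIntegral.integral_hasDerivAt_right (hcont.intervalIntegrable 0 t)
    (hcont.stronglyMeasurableAtFilter _ _) hcont.continuousAt).const_add x₀
  exact hderiv.congr_of_eventuallyEq (Eventually.of_forall hz)

lemma isIntegralCurve_comp_neg {z : ℝ → E} (hz : IsIntegralCurve z fun _ => v) :
    IsIntegralCurve (fun t => z (-t)) fun _ x => -v x := fun t => by
  simpa [Function.comp_def] using (hz (-t)).scomp t (hasDerivAt_neg t)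

lemma dist_le_dist_zero_mul_exp_of_isIntegralCurve (hv : LipschitzWith K v) {z w : ℝ → E}
    (hz : IsIntegralCurve z fun _ => v) (hw : IsIntegralCurve w fun _ => v) (t : ℝ) :
    dist (z t) (w t) ≤ dist (z 0) (w 0) * Real.exp (K * |t|) := by
  have of_nonneg : ∀ {v : E → E}, LipschitzWith K v → ∀ {z w : ℝ → E},
      (IsIntegralCurve z fun _ => v) → (IsIntegralCurve w fun _ => v) → ∀ {t : ℝ}, 0 ≤ t →
      dist (z t) (w t) ≤ dist (z 0) (w 0) * Real.exp (K * |t|) := by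
    intro v hv z w hz hw t ht
    simpa [abs_of_nonneg ht] using dist_le_of_trajectories_ODE (fun _ => hv)
      hz.continuous.continuousOn (fun s _ => (hz s).hasDerivWithinAt)
      hw.continuous.continuousOn (fun s _ => (hw s).hasDerivWithinAt) le_rfl t ⟨ht, le_rfl⟩
  rcases le_total 0 t with ht | ht
  · exact of_nonneg hv hz hw ht
  · simpa using of_nonneg hv.neg (isIntegralCurve_comp_neg hz) (isIntegralCurve_comp_neg hw)
      (neg_nonneg.2 ht)

theorem exists_isIntegralCurve_forall_nonpos_mem [CompleteSpace E] (hv : LipschitzWith K v)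
    {C R : Set E} (hC : IsCompact C) (hR : IsClosed R)
    (h : ∀ n : ℕ, ∃ z : ℝ → E, (IsIntegralCurve z fun _ => v) ∧ z 0 ∈ C ∧
      ∀ t ∈ Icc (-n : ℝ) 0, z t ∈ R) :
    ∃ z : ℝ → E, (IsIntegralCurve z fun _ => v) ∧ z 0 ∈ C ∧ ∀ t ≤ 0, z t ∈ R := by
  choose flow flow_zero hflow using exists_isIntegralCurve_of_lipschitzWith hv
  have dist_flow : ∀ {z : ℝ → E}, (IsIntegralCurve z fun _ => v) → ∀ x t,
      dist (z t) (flow x t) ≤ dist (z 0) x * Real.exp (K * |t|) := fun hz x t => by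
    simpa only [flow_zero] using dist_le_dist_zero_mul_exp_of_isIntegralCurve hv hz (hflow x) t
  have flow_cont : ∀ t, Continuous fun x => flow x t := fun t =>
    (LipschitzWith.of_dist_le' (K := Real.exp (K * |t|)) fun x y => by
      rw [mul_comm]
      simpa only [flow_zero] using dist_flow (hflow x) y t).continuous
  let S : ℕ → Set E := fun n => C ∩ ⋂ t ∈ Icc (-n : ℝ) 0, {x | flow x t ∈ R}
  have S_closed : ∀ n, IsClosed (⋂ t ∈ Icc (-n : ℝ) 0, {x | flow x t ∈ R}) := fun n =>
    isClosed_biInter fun t _ => hR.preimage (flow_cont t)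
  have S_anti : ∀ n, S (n + 1) ⊆ S n := fun n =>
    inter_subset_inter_right _ (biInter_subset_biInter_left
      (Icc_subset_Icc_left (by push_cast; linarith)))
  have S_nonempty : ∀ n, (S n).Nonempty := fun n => by
    obtain ⟨z, hz, hz0, hzR⟩ := h n
    have hzflow : ∀ t, z t = flow (z 0) t := fun t =>
      dist_le_zero.1 ((dist_flow hz (z 0) t).trans_eq (by rw [dist_self, zero_mul]))
    exact ⟨z 0, hz0, mem_iInter₂.2 fun t ht =>
      show flow (z 0) t ∈ R from hzflow t ▸ hzR t ht⟩
  obtain ⟨x, hx⟩ := IsCompact.nonempty_iInter_of_sequence_nonempty_isCompact_isClosed S S_anti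
    S_nonempty (hC.inter_right (S_closed _)) fun n => (hC.inter_right (S_closed n)).isClosed
  have hxS : ∀ n, x ∈ S n := mem_iInter.1 hx
  refine ⟨flow x, hflow x, by rw [flow_zero]; exact (hxS 0).1, fun t ht => ?_⟩
  obtain ⟨n, hn⟩ := exists_nat_ge (-t)
  exact mem_iInter₂.1 (hxS n).2 t ⟨by linarith, ht⟩

end LipschitzFlow

section Convergence

variable {E : Type*} [NormedAddCommGroup E] [NormedSpace ℝ E]

theorem tendsto_derivWithin_zero_of_uniformContinuousOn {f f' : ℝ → E} {l : E} {a : ℝ}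
    (hf : ∀ t ∈ Ici a, HasDerivWithinAt f (f' t) (Ici a) t)
    (hf' : UniformContinuousOn f' (Ici a)) (hlim : Tendsto f atTop (𝓝 l)) :
    Tendsto f' atTop (𝓝 0) := by
  rw [Metric.tendsto_atTop]
  intro ε hε
  obtain ⟨δ, hδ, hosc⟩ := Metric.uniformContinuousOn_iff.1 hf' (ε / 2) (half_pos hε)
  obtain ⟨N, hN⟩ := Metric.cauchySeq_iff.1 hlim.cauchySeq (δ / 2 * (ε / 2)) (by positivity)
  refine ⟨max a N, fun t ht => ?_⟩
  have hta : a ≤ t := (le_max_left a N).trans ht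
  have htN : N ≤ t := (le_max_right a N).trans ht
  have hmean : ‖(f (t + δ / 2) - f t) - (δ / 2) • f' t‖ ≤ ε / 2 * (δ / 2) := by
    have hsub : Icc t (t + δ / 2) ⊆ Ici a := fun s hs => hta.trans hs.1
    have := Convex.norm_image_sub_le_of_norm_hasDerivWithin_le
      (f := fun s => f s - s • f' t) (f' := fun s => f' s - (1 : ℝ) • f' t) (C := ε / 2)
      (fun s hs => ((hf s (hsub hs)).mono hsub).sub ((hasDerivWithinAt_id s _).smul_const (f' t)))
      (fun s hs => by
        rw [one_smul, ← dist_eq_norm]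
        refine (hosc s (hsub hs) t hta ?_).le
        rw [Real.dist_eq, abs_of_nonneg (sub_nonneg.2 hs.1)]
        linarith [hs.2]) (convex_Icc t (t + δ / 2)) (left_mem_Icc.2 (by linarith))
      (right_mem_Icc.2 (by linarith))
    rw [add_sub_cancel_left, Real.norm_of_nonneg (half_pos hδ).le] at this
    convert this using 2
    rw [add_smul]
    abel
  have hsmall : ‖f (t + δ / 2) - f t‖ < δ / 2 * (ε / 2) := by
    rw [← dist_eq_norm]
    exact hN _ (htN.trans (by linarith)) _ htN
  have hscaled : δ / 2 * ‖f' t‖ < δ / 2 * ε := calc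
    δ / 2 * ‖f' t‖ = ‖(δ / 2) • f' t‖ := by
      rw [norm_smul, Real.norm_of_nonneg (half_pos hδ).le]
    _ ≤ ‖f (t + δ / 2) - f t‖ + ‖(f (t + δ / 2) - f t) - (δ / 2) • f' t‖ :=
      norm_le_norm_add_norm_sub _ _
    _ < δ / 2 * ε := by linarith
  rw [dist_zero_right]
  exact lt_of_mul_lt_mul_left hscaled (half_pos hδ).le

theorem tendsto_deriv_zero_of_isIntegralCurveOn {v : E → E} {C : Set E} {z : ℝ → E} {a : ℝ}
    (hC : IsCompact C) (hv : ContinuousOn v C) (hz : IsIntegralCurveOn z (fun _ => v) (Ici a))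
    (hzC : ∀ t ∈ Ici a, z t ∈ C) {F : Type*} [NormedAddCommGroup F] [NormedSpace ℝ F]
    {φ : E → F} (hφ : ContinuousOn φ C) {f : ℝ → F} {l : F}
    (hf : ∀ t ∈ Ici a, HasDerivWithinAt f (φ (z t)) (Ici a) t) (hlim : Tendsto f atTop (𝓝 l)) :
    Tendsto (fun t => φ (z t)) atTop (𝓝 0) := by
  obtain ⟨M, hM⟩ := hC.exists_bound_of_continuousOn hv
  have hM' : ∀ t ∈ Ici a, ‖v (z t)‖₊ ≤ M.toNNReal := fun t ht =>
    NNReal.coe_le_coe.1 ((hM _ (hzC t ht)).trans (Real.le_coe_toNNReal M))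
  have hz_unif : UniformContinuousOn z (Ici a) :=
    ((convex_Ici a).lipschitzOnWith_of_nnnorm_hasDerivWithin_le hz hM').uniformContinuousOn
  exact tendsto_derivWithin_zero_of_uniformContinuousOn hf
    ((hC.uniformContinuousOn_of_continuous hφ).comp hz_unif hzC) hlim

end Convergence

section DampedOscillator

/-- The vector field of the first-order system `u' = w`, `w' = g u - c w` associated with the
oscillator `u'' = g u - c u'` with friction coefficient `c`. -/
def dampedField (g : ℝ → ℝ) (c : ℝ) (z : ℝ × ℝ) : ℝ × ℝ :=
  (z.2, g z.1 - c * z.2)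

/-- The mechanical energy of the state `z = (u, w)` of an oscillator with force `g`: kinetic energy
plus the potential whose derivative is `-g`, normalized to vanish at `0`. In particular
`energy g (u, 0)` is the potential at `u`. -/
noncomputable def energy (g : ℝ → ℝ) (z : ℝ × ℝ) : ℝ :=
  z.2 ^ 2 / 2 - ∫ u in 0..z.1, g u

/-- The phase-space curve `(u, u')` of the time-reversed motion `t ↦ u (-t)`. -/
def timeReversal (z : ℝ → ℝ × ℝ) (t : ℝ) : ℝ × ℝ :=
  ((z (-t)).1, -(z (-t)).2)

variable {g : ℝ → ℝ} {c : ℝ} {z : ℝ → ℝ × ℝ}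

lemma isIntegralCurve_dampedField_iff :
    (IsIntegralCurve z fun _ => dampedField g c) ↔
      (∀ t, HasDerivAt (fun t => (z t).1) (z t).2 t) ∧
        ∀ t, HasDerivAt (fun t => (z t).2) (g (z t).1 - c * (z t).2) t :=
  ⟨fun h => ⟨fun t => (h t).fst, fun t => (h t).snd⟩, fun h t => (h.1 t).prodMk (h.2 t)⟩

lemma timeReversal_timeReversal (z : ℝ → ℝ × ℝ) : timeReversal (timeReversal z) = z := by
  ext t <;> simp only [timeReversal, neg_neg]

lemma tendsto_timeReversal {l l' : Filter ℝ} (hl : Tendsto Neg.neg l' l) {x : ℝ}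
    (hz : Tendsto z l (𝓝 (x, 0))) : Tendsto (timeReversal z) l' (𝓝 (x, 0)) := by
  have hflip : Continuous fun w : ℝ × ℝ => (w.1, -w.2) := by fun_prop
  have hlim := ((hflip.tendsto (x, 0)).comp hz).comp hl
  rwa [neg_zero] at hlim

lemma isIntegralCurve_timeReversal (hz : IsIntegralCurve z fun _ => dampedField g c) :
    IsIntegralCurve (timeReversal z) fun _ => dampedField g (-c) := by
  obtain ⟨hu, hw⟩ := isIntegralCurve_dampedField_iff.1 hz
  refine isIntegralCurve_dampedField_iff.2 ⟨fun t => ?_, fun t => ?_⟩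
  · exact ((hu (-t)).scomp t (hasDerivAt_neg t)).congr_deriv (by simp [timeReversal])
  · exact ((hw (-t)).scomp t (hasDerivAt_neg t)).neg.congr_deriv (by simp [timeReversal])

lemma continuous_dampedField (hg : Continuous g) : Continuous (dampedField g c) := by
  unfold dampedField
  fun_prop

lemma exists_lipschitzWith_dampedField {K : ℝ≥0} (hg : LipschitzWith K g) (c : ℝ) :
    ∃ K' : ℝ≥0, LipschitzWith K' (dampedField g c) :=
  ⟨_, LipschitzWith.prod_snd.prodMk ((hg.comp LipschitzWith.prod_fst).sub
    ((lipschitzWith_smul c).comp LipschitzWith.prod_snd))⟩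

lemma energy_zero_sub_energy_zero (hg : Continuous g) (a b : ℝ) :
    energy g (a, 0) - energy g (b, 0) = ∫ u in a..b, g u := by
  rw [← intervalIntegral.integral_interval_sub_left (hg.intervalIntegrable 0 b)
    (hg.intervalIntegrable 0 a)]
  simp only [energy]
  ring

lemma energy_zero_le (z : ℝ × ℝ) : energy g (z.1, 0) ≤ energy g z := by
  simp only [energy]
  nlinarith [sq_nonneg z.2]

lemma continuous_energy (hg : Continuous g) : Continuous (energy g) :=
  ((continuous_snd.pow 2).div_const 2).sub
    ((intervalIntegral.continuous_primitive (fun a b => hg.intervalIntegrable a b) 0).comp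
      continuous_fst)

lemma hasDerivAt_energy (hg : Continuous g) (hz : IsIntegralCurve z fun _ => dampedField g c)
    (t : ℝ) : HasDerivAt (fun t => energy g (z t)) (-(c * (z t).2 ^ 2)) t := by
  obtain ⟨hu, hw⟩ := isIntegralCurve_dampedField_iff.1 hz
  have hpot := (intervalIntegral.integral_hasDerivAt_right (hg.intervalIntegrable 0 (z t).1)
    (hg.stronglyMeasurableAtFilter _ _) hg.continuousAt).comp t (hu t)
  exact ((((hw t).pow 2).div_const 2).sub hpot).congr_deriv (by push_cast; ring)

lemma antitone_energy (hg : Continuous g) (hc : 0 ≤ c)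
    (hz : IsIntegralCurve z fun _ => dampedField g c) : Antitone fun t => energy g (z t) :=
  antitone_of_hasDerivAt_nonpos (hasDerivAt_energy hg hz) fun _ =>
    neg_nonpos.2 (mul_nonneg hc (sq_nonneg _))

lemma monotone_energy (hg : Continuous g) (hc : c ≤ 0)
    (hz : IsIntegralCurve z fun _ => dampedField g c) : Monotone fun t => energy g (z t) :=
  monotone_of_hasDerivAt_nonneg (hasDerivAt_energy hg hz) fun _ =>
    neg_nonneg.2 (mul_nonpos_of_nonpos_of_nonneg hc (sq_nonneg _))

lemma isCompact_fst_mem_and_energy_le (hg : Continuous g) {S : Set ℝ} (hS : IsCompact S) (e : ℝ) :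
    IsCompact {w : ℝ × ℝ | w.1 ∈ S ∧ energy g w ≤ e} := by
  obtain ⟨m, hm⟩ := hS.exists_bound_of_continuousOn
    ((continuous_energy hg).comp (continuous_id.prodMk continuous_const)).continuousOn
    (f := fun u => energy g (u, (0 : ℝ)))
  refine (hS.prod (isCompact_closedBall 0 (Real.sqrt (2 * (e + m))))).of_isClosed_subset ?_ ?_
  · exact (hS.isClosed.preimage continuous_fst).inter
      (isClosed_le (continuous_energy hg) continuous_const)
  · rintro ⟨u, w⟩ ⟨hu, he⟩
    refine ⟨hu, mem_closedBall_zero_iff.2 (Real.abs_le_sqrt ?_)⟩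
    have hmu := neg_le_of_abs_le (hm u hu)
    simp only [energy] at he hmu
    linarith

lemma exists_tendsto_energy_of_forall_mem_isCompact (hg : Continuous g)
    (hz : IsIntegralCurve z fun _ => dampedField g c) {C : Set (ℝ × ℝ)} (hC : IsCompact C)
    (hzC : ∀ t, 0 ≤ t → z t ∈ C) : ∃ e, Tendsto (fun t => energy g (z t)) atTop (𝓝 e) := by
  obtain ⟨M, hM⟩ := hC.exists_bound_of_continuousOn (continuous_energy hg).continuousOn
  have hbdd : ∀ᶠ t in atTop, |energy g (z t)| ≤ M :=
    (eventually_ge_atTop 0).mono fun t ht => hM _ (hzC t ht)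
  rcases le_total 0 c with hc | hc
  · refine (tendsto_atTop_of_antitone (antitone_energy hg hc hz)).resolve_left fun h => ?_
    obtain ⟨t, ht, htM⟩ := ((h.eventually_lt_atBot (-M)).and hbdd).exists
    exact ht.not_ge (neg_le_of_abs_le htM)
  · refine (tendsto_atTop_of_monotone (monotone_energy hg hc hz)).resolve_left fun h => ?_
    obtain ⟨t, ht, htM⟩ := ((h.eventually_gt_atTop M).and hbdd).exists
    exact ht.not_ge (le_of_abs_le htM)

theorem tendsto_equilibrium_of_forall_mem_isCompact (hg : Continuous g) (hc : c ≠ 0)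
    (hz : IsIntegralCurve z fun _ => dampedField g c) {C : Set (ℝ × ℝ)} (hC : IsCompact C)
    (hzC : ∀ t, 0 ≤ t → z t ∈ C) {x : ℝ} (hx : ∀ w ∈ C, g w.1 = 0 → w.1 = x) :
    Tendsto z atTop (𝓝 (x, 0)) := by
  obtain ⟨-, hw'⟩ := isIntegralCurve_dampedField_iff.1 hz
  have hzOn := hz.isIntegralCurveOn (Ici 0)
  have hfield := (continuous_dampedField hg (c := c)).continuousOn (s := C)
  obtain ⟨e, he⟩ := exists_tendsto_energy_of_forall_mem_isCompact hg hz hC hzC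
  have hw : Tendsto (fun t => (z t).2) atTop (𝓝 0) := by
    have hpower := tendsto_deriv_zero_of_isIntegralCurveOn hC hfield hzOn hzC
      (φ := fun w => -(c * w.2 ^ 2)) (by fun_prop)
      (fun t _ => (hasDerivAt_energy hg hz t).hasDerivWithinAt) he
    have hsq : Tendsto (fun t => (z t).2 ^ 2) atTop (𝓝 0) := by
      simpa [hc] using hpower.const_mul (-c⁻¹)
    exact (tendsto_zero_iff_abs_tendsto_zero _).2 (by
      simpa [Real.sqrt_sq_eq_abs, Function.comp_def] using hsq.sqrt)
  have hforce : Tendsto (fun t => g (z t).1) atTop (𝓝 0) := by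
    have hacc := tendsto_deriv_zero_of_isIntegralCurveOn hC hfield hzOn hzC
      (φ := fun w => g w.1 - c * w.2) (by fun_prop)
      (fun t _ => (hw' t).hasDerivWithinAt) hw
    simpa using hacc.add (hw.const_mul c)
  refine hC.tendsto_nhds_of_unique_mapClusterPt
    ((eventually_ge_atTop 0).mono hzC) fun w hwC hcluster => ?_
  obtain ⟨τ, hzτ, hτ⟩ := hcluster.exists_seq_tendsto
  have hw2 : w.2 = 0 :=
    tendsto_nhds_unique ((continuous_snd.tendsto w).comp hzτ) (hw.comp hτ)
  have hgw : g w.1 = 0 :=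
    tendsto_nhds_unique (((hg.comp continuous_fst).tendsto w).comp hzτ) (hforce.comp hτ)
  exact Prod.ext (hx w hwC hgw) hw2

theorem tendsto_equilibrium_atBot_of_forall_mem_isCompact (hg : Continuous g) (hc : c ≠ 0)
    (hz : IsIntegralCurve z fun _ => dampedField g c) {C : Set (ℝ × ℝ)} (hC : IsCompact C)
    (hzC : ∀ t ≤ 0, z t ∈ C) {x : ℝ} (hx : ∀ w ∈ C, g w.1 = 0 → w.1 = x) :
    Tendsto z atBot (𝓝 (x, 0)) := by
  have hflip : Continuous fun w : ℝ × ℝ => (w.1, -w.2) := by fun_prop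
  have hlim : Tendsto (timeReversal z) atTop (𝓝 (x, 0)) :=
    tendsto_equilibrium_of_forall_mem_isCompact hg (neg_ne_zero.2 hc)
      (isIntegralCurve_timeReversal hz) (hC.image hflip)
      (fun t ht => mem_image_of_mem _ (hzC (-t) (neg_nonpos.2 ht))) (forall_mem_image.2 hx)
  exact timeReversal_timeReversal z ▸ tendsto_timeReversal tendsto_neg_atBot_atTop hlim

lemma fst_mem_Ioo_of_energy_lt (hg : Continuous g) (hc : 0 ≤ c)
    (hz : IsIntegralCurve z fun _ => dampedField g c) {l r : ℝ} (h0 : (z 0).1 ∈ Ioo l r)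
    (hl : energy g (z 0) < energy g (l, 0)) (hr : energy g (z 0) < energy g (r, 0)) {t : ℝ}
    (ht : 0 ≤ t) : (z t).1 ∈ Ioo l r := by
  have hord : OrdConnected ((fun t => (z t).1) '' Ici 0) :=
    (isPreconnected_Ici.image _ hz.continuous.fst.continuousOn).ordConnected
  have hbarrier : ∀ x, energy g (z 0) < energy g (x, 0) → x ∉ (fun t => (z t).1) '' Ici 0 := by
    rintro _ hx ⟨s, hs, rfl⟩
    exact hx.not_ge ((energy_zero_le (z s)).trans (antitone_energy hg hc hz hs))
  have h0mem := mem_image_of_mem (fun t => (z t).1) (self_mem_Ici (a := (0 : ℝ)))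
  have htmem := mem_image_of_mem (fun t => (z t).1) (mem_Ici.2 ht)
  refine ⟨lt_of_not_ge fun h => hbarrier l hl ?_, lt_of_not_ge fun h => hbarrier r hr ?_⟩
  · exact hord.out htmem h0mem ⟨h, h0.1.le⟩
  · exact hord.out h0mem htmem ⟨h0.2.le, h⟩

theorem tendsto_equilibrium_of_energy_lt (hg : Continuous g) (hc : 0 < c)
    (hz : IsIntegralCurve z fun _ => dampedField g c) {l r x : ℝ} (h0 : (z 0).1 ∈ Ioo l r)
    (hl : energy g (z 0) < energy g (l, 0)) (hr : energy g (z 0) < energy g (r, 0))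
    (hx : ∀ u ∈ Ioo l r, g u = 0 → u = x) : Tendsto z atTop (𝓝 (x, 0)) := by
  refine tendsto_equilibrium_of_forall_mem_isCompact hg hc.ne' hz
    (isCompact_fst_mem_and_energy_le hg (isCompact_Icc (a := l) (b := r)) (energy g (z 0)))
    (fun t ht => ⟨Ioo_subset_Icc_self (fst_mem_Ioo_of_energy_lt hg hc.le hz h0 hl hr ht),
      antitone_energy hg hc.le hz ht⟩) ?_
  rintro w ⟨⟨hlw, hwr⟩, hwe⟩ hgw
  have hpot := (energy_zero_le w).trans hwe
  refine hx w.1 ⟨hlw.lt_of_ne ?_, hwr.lt_of_ne ?_⟩ hgw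
  · rintro rfl
    exact hl.not_ge hpot
  · rintro rfl
    exact hr.not_ge hpot

lemma exists_eq_and_forall_Icc_le {f : ℝ → ℝ} (hf : Continuous f) {a t p : ℝ} (hat : a ≤ t)
    (hpa : p ≤ f a) (htp : f t ≤ p) : ∃ T, a ≤ T ∧ f T = p ∧ ∀ s ∈ Icc a T, p ≤ f s := by
  have hclosed : IsClosed {s | s ∈ Icc a t ∧ f s = p} :=
    isClosed_Icc.inter (isClosed_eq hf continuous_const)
  obtain ⟨T, ⟨hT, hfT⟩, hTmin⟩ :=
    (isCompact_Icc.of_isClosed_subset hclosed fun s hs => hs.1).exists_isLeast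
      (intermediate_value_Icc' hat hf.continuousOn ⟨htp, hpa⟩)
  refine ⟨T, hT.1, hfT, fun s hs => le_of_not_gt fun hlt => ?_⟩
  obtain ⟨s', hs', hfs'⟩ := intermediate_value_Icc' hs.1 hf.continuousOn ⟨hlt.le, hpa⟩
  have hTs' : T ≤ s' := hTmin ⟨⟨hs'.1, hs'.2.trans (hs.2.trans hT.2)⟩, hfs'⟩
  have hsT : s = T := le_antisymm hs.2 (hTs'.trans hs'.2)
  exact hlt.ne (hsT ▸ hfT)

theorem energy_lt_of_tendsto_atBot (hg : Continuous g) (hc : 0 < c)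
    (hz : IsIntegralCurve z fun _ => dampedField g c) {x : ℝ}
    (hlim : Tendsto z atBot (𝓝 (x, 0))) (hne : (z 0).1 ≠ x) :
    energy g (z 0) < energy g (x, 0) := by
  have hle : ∀ t, energy g (z t) ≤ energy g (x, 0) := fun t =>
    (antitone_energy hg hc.le hz).ge_of_tendsto
      (((continuous_energy hg).tendsto _).comp hlim) t
  refine (hle 0).lt_of_ne fun heq => hne ?_
  have hrest : ∀ t < 0, (z t).2 = 0 := fun t ht => by
    have hmax : IsLocalMax (fun t => energy g (z t)) t := Eventually.of_forall fun s =>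
      (hle s).trans (heq.ge.trans (antitone_energy hg hc.le hz ht.le))
    simpa [hc.ne'] using hmax.hasDerivAt_eq_zero (hasDerivAt_energy hg hz t)
  have hconst : ∀ t < 0, (z t).1 = (z 0).1 := fun t ht => by
    obtain ⟨s, hs, hslope⟩ := exists_hasDerivAt_eq_slope _ _ ht
      hz.continuous.fst.continuousOn fun s _ => (isIntegralCurve_dampedField_iff.1 hz).1 s
    rw [hrest s hs.2, eq_comm, div_eq_zero_iff, sub_eq_zero] at hslope
    exact (hslope.resolve_right (by linarith)).symm
  exact tendsto_nhds_unique (tendsto_const_nhds.congr' ((eventually_lt_atBot 0).mono fun t ht =>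
    (hconst t ht).symm)) ((continuous_fst.tendsto _).comp hlim)

end DampedOscillator

section Heteroclinic

/-- The force `g` drives towards `x` inside the well `(l, y)` and vanishes at its right end `y`, and
the potential is at least as high at `l` as at `y`; thus an oscillator of energy below the level of
`y` which starts in the well stays there. -/
structure IsPotentialWell (g : ℝ → ℝ) (l x y : ℝ) : Prop where
  left_lt : l < x
  lt_right : x < y
  pos : ∀ u ∈ Ioo l x, 0 < g u
  neg : ∀ u ∈ Ioo x y, g u < 0
  apply_right : g y = 0
  integral_nonneg : 0 ≤ ∫ u in l..y, g u

namespace IsPotentialWell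

variable {g : ℝ → ℝ} {l x y c : ℝ} {z : ℝ → ℝ × ℝ} {K : ℝ≥0}

lemma congr (h : IsPotentialWell g l x y) {g' : ℝ → ℝ} (hgg' : EqOn g g' (Icc l y)) :
    IsPotentialWell g' l x y where
  left_lt := h.left_lt
  lt_right := h.lt_right
  pos u hu := hgg' ⟨hu.1.le, (hu.2.trans h.lt_right).le⟩ ▸ h.pos u hu
  neg u hu := hgg' ⟨(h.left_lt.trans hu.1).le, hu.2.le⟩ ▸ h.neg u hu
  apply_right := hgg' (right_mem_Icc.2 (h.left_lt.trans h.lt_right).le) ▸ h.apply_right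
  integral_nonneg := by
    rw [← intervalIntegral.integral_congr (hgg'.mono
      (uIcc_of_le (h.left_lt.trans h.lt_right).le).subset)]
    exact h.integral_nonneg

lemma eq_of_apply_eq_zero (h : IsPotentialWell g l x y) {u : ℝ} (hu : u ∈ Ioo l y)
    (hgu : g u = 0) : u = x := by
  rcases lt_trichotomy u x with hux | hux | hux
  · exact absurd hgu (h.pos u ⟨hu.1, hux⟩).ne'
  · exact hux
  · exact absurd hgu (h.neg u ⟨hux, hu.2⟩).ne

lemma energy_right_le_energy_left (hg : Continuous g) (h : IsPotentialWell g l x y) :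
    energy g (y, 0) ≤ energy g (l, 0) :=
  sub_nonneg.1 (energy_zero_sub_energy_zero hg l y ▸ h.integral_nonneg)

lemma energy_lt_energy_right (hg : Continuous g) (h : IsPotentialWell g l x y) {q : ℝ}
    (hq : q ∈ Ioo x y) : energy g (q, 0) < energy g (y, 0) := by
  rw [← sub_pos, energy_zero_sub_energy_zero hg, intervalIntegral.integral_symm,
    ← intervalIntegral.integral_neg]
  exact intervalIntegral.intervalIntegral_pos_of_pos_on
    (hg.neg.intervalIntegrable _ _) (fun u hu => neg_pos.2 (h.neg u ⟨hq.1.trans hu.1, hu.2⟩)) hq.2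

lemma fst_mem_Ioo (hg : Continuous g) (h : IsPotentialWell g l x y) (hc : 0 ≤ c)
    (hz : IsIntegralCurve z fun _ => dampedField g c) (h0 : (z 0).1 ∈ Ioo l y)
    (he : energy g (z 0) < energy g (y, 0)) {t : ℝ} (ht : 0 ≤ t) : (z t).1 ∈ Ioo l y :=
  fst_mem_Ioo_of_energy_lt hg hc hz h0 (he.trans_le (h.energy_right_le_energy_left hg)) he ht

lemma tendsto_bottom (hg : Continuous g) (h : IsPotentialWell g l x y) (hc : 0 < c)
    (hz : IsIntegralCurve z fun _ => dampedField g c) (h0 : (z 0).1 ∈ Ioo l y)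
    (he : energy g (z 0) < energy g (y, 0)) : Tendsto z atTop (𝓝 (x, 0)) :=
  tendsto_equilibrium_of_energy_lt hg hc hz h0
    (he.trans_le (h.energy_right_le_energy_left hg)) he fun _ hu => h.eq_of_apply_eq_zero hu

lemma exists_descent (hg : Continuous g) (h : IsPotentialWell g l x y) (hc : 0 < c) {p q : ℝ}
    (hxp : x < p) (hq : q ∈ Ioo p y) (hz : IsIntegralCurve z fun _ => dampedField g c)
    (h0 : z 0 = (q, 0)) :
    ∃ T, 0 ≤ T ∧ (z T).1 = p ∧
      ∀ t ∈ Icc 0 T, z t ∈ {w | w.1 ∈ Icc p y ∧ energy g w ≤ energy g (y, 0)} := by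
  have h0mem : (z 0).1 ∈ Ioo l y := h0 ▸ ⟨h.left_lt.trans (hxp.trans hq.1), hq.2⟩
  have he : energy g (z 0) < energy g (y, 0) :=
    h0 ▸ h.energy_lt_energy_right hg ⟨hxp.trans hq.1, hq.2⟩
  have hlim : Tendsto (fun t => (z t).1) atTop (𝓝 x) :=
    (continuous_fst.tendsto _).comp (h.tendsto_bottom hg hc hz h0mem he)
  obtain ⟨t, ht, ht0⟩ := ((hlim.eventually_lt_const hxp).and (eventually_ge_atTop 0)).exists
  obtain ⟨T, hT, hzT, hle⟩ := exists_eq_and_forall_Icc_le hz.continuous.fst ht0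
    (h0 ▸ hq.1.le) ht.le
  exact ⟨T, hT, hzT, fun s hs => ⟨⟨hle s hs, (h.fst_mem_Ioo hg hc.le hz h0mem he hs.1).2.le⟩,
    (antitone_energy hg hc.le hz hs.1).trans he.le⟩⟩

lemma exists_slow_descent (hg : LipschitzWith K g) (h : IsPotentialWell g l x y) (hc : 0 < c)
    {p : ℝ} (hp : p ∈ Ioo x y) (n : ℕ) :
    ∃ z : ℝ → ℝ × ℝ, (IsIntegralCurve z fun _ => dampedField g c) ∧ (z 0).1 = p ∧
      ∀ t ∈ Icc (-n : ℝ) 0, z t ∈ {w | w.1 ∈ Icc p y ∧ energy g w ≤ energy g (y, 0)} := by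
  obtain ⟨K', hv⟩ := exists_lipschitzWith_dampedField hg c
  have hexp : 1 ≤ Real.exp (K' * n) := Real.one_le_exp (by positivity)
  have hyp : 0 < y - p := sub_pos.2 hp.2
  obtain ⟨q, hpq, hqy⟩ : ∃ q, p < q ∧ q < y ∧ (y - q) * Real.exp (K' * n) < y - p := by
    refine ⟨y - (y - p) / (2 * Real.exp (K' * n)), ?_, sub_lt_self _ (by positivity), ?_⟩
    · have : (y - p) / (2 * Real.exp (K' * n)) < y - p := div_lt_self hyp (by linarith)
      linarith
    · rw [sub_sub_cancel, div_mul_eq_mul_div, mul_div_mul_right _ _ (Real.exp_pos _).ne']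
      exact half_lt_self hyp
  obtain ⟨z, hz0, hz⟩ := exists_isIntegralCurve_of_lipschitzWith hv (q, 0)
  obtain ⟨T, hT, hzT, hmem⟩ := h.exists_descent hg.continuous hc hp.1 ⟨hpq, hqy.1⟩ hz hz0
  have hrest : IsIntegralCurve (fun _ => ((y, 0) : ℝ × ℝ)) fun _ => dampedField g c :=
    isIntegralCurve_const fun _ => by simp [dampedField, h.apply_right]
  have hnT : n ≤ T := le_of_not_gt fun hTn => hqy.2.not_ge <| calc
    y - p = dist (z T).1 y := by rw [hzT, dist_comm, Real.dist_eq, abs_of_pos hyp]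
    _ ≤ dist (z T) (y, 0) := le_max_left _ _
    _ ≤ dist (z 0) (y, 0) * Real.exp (K' * |T|) :=
      dist_le_dist_zero_mul_exp_of_isIntegralCurve hv hz hrest T
    _ ≤ (y - q) * Real.exp (K' * n) := by
      rw [hz0, dist_prod_same_right, dist_comm, Real.dist_eq, abs_of_pos (sub_pos.2 hqy.1),
        abs_of_nonneg hT]
      gcongr
      exact sub_nonneg.2 hqy.1.le
  exact ⟨fun t => z (t + T), hz.comp_add T, by simpa using hzT, fun t ht =>
    hmem _ ⟨by linarith [ht.1], by linarith [ht.2]⟩⟩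

theorem exists_heteroclinic_of_lipschitzWith (hg : LipschitzWith K g)
    (h : IsPotentialWell g l x y) (hc : 0 < c) :
    ∃ z : ℝ → ℝ × ℝ, (IsIntegralCurve z fun _ => dampedField g c) ∧ (∀ t, (z t).1 ∈ Icc l y) ∧
      Tendsto z atBot (𝓝 (y, 0)) ∧ Tendsto z atTop (𝓝 (x, 0)) := by
  obtain ⟨p, hp⟩ := exists_between h.lt_right
  obtain ⟨K', hv⟩ := exists_lipschitzWith_dampedField hg c
  have hR := isCompact_fst_mem_and_energy_le hg.continuous (isCompact_Icc (a := p) (b := y))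
    (energy g (y, 0))
  obtain ⟨z, hz, ⟨hzp, -⟩, hzR⟩ := exists_isIntegralCurve_forall_nonpos_mem hv
    (hR.inter_left (isClosed_singleton.preimage continuous_fst) :
      IsCompact (Prod.fst ⁻¹' {p} ∩ _)) hR.isClosed fun n => by
    obtain ⟨z, hz, hzp, hzR⟩ := h.exists_slow_descent hg hc hp n
    exact ⟨z, hz, ⟨hzp, hzR 0 ⟨by simp, le_rfl⟩⟩, hzR⟩
  have hbot : Tendsto z atBot (𝓝 (y, 0)) := by
    refine tendsto_equilibrium_atBot_of_forall_mem_isCompact hg.continuous hc.ne' hz hR hzR ?_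
    rintro w ⟨⟨hpw, hwy⟩, -⟩ hgw
    exact hwy.eq_of_not_lt fun hlt => (h.neg w.1 ⟨hp.1.trans_le hpw, hlt⟩).ne hgw
  have he : energy g (z 0) < energy g (y, 0) :=
    energy_lt_of_tendsto_atBot hg.continuous hc hz hbot (hzp ▸ hp.2.ne)
  have h0 : (z 0).1 ∈ Ioo l y := hzp ▸ ⟨h.left_lt.trans hp.1, hp.2⟩
  refine ⟨z, hz, fun t => ?_, hbot, h.tendsto_bottom hg.continuous hc hz h0 he⟩
  rcases le_total t 0 with ht | ht
  · exact Icc_subset_Icc_left (h.left_lt.trans hp.1).le (hzR t ht).1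
  · exact Ioo_subset_Icc_self (h.fst_mem_Ioo hg.continuous hc.le hz h0 he ht)

theorem exists_heteroclinic (h : IsPotentialWell g l x y) (hg : LipschitzOnWith K g (Icc l y))
    (hc : 0 < c) :
    ∃ z : ℝ → ℝ × ℝ, (IsIntegralCurve z fun _ => dampedField g c) ∧
      Tendsto z atBot (𝓝 (y, 0)) ∧ Tendsto z atTop (𝓝 (x, 0)) := by
  obtain ⟨g', hg', hgg'⟩ := hg.extend_real
  obtain ⟨z, hz, hmem, hbot, htop⟩ := (h.congr hgg').exists_heteroclinic_of_lipschitzWith hg' hc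
  refine ⟨z, fun t => ?_, hbot, htop⟩
  have hfield : dampedField g c (z t) = dampedField g' c (z t) := by
    simp only [dampedField, hgg' (hmem t)]
  exact (hz t).congr_deriv hfield.symm

end IsPotentialWell

end Heteroclinic

section LogarithmicProfile

/-- The force of the oscillator satisfied by `u = log P` when `P' = Q` and
`Q' = f P - c Q + Q ^ 2 / P`. -/
noncomputable def logForce (f : ℝ → ℝ) (u : ℝ) : ℝ :=
  f (Real.exp u) * Real.exp (-u)

theorem exists_profile_of_isIntegralCurve_logForce {f : ℝ → ℝ} {c a b : ℝ} (ha : 0 < a)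
    (hb : 0 < b) {z : ℝ → ℝ × ℝ} (hz : IsIntegralCurve z fun _ => dampedField (logForce f) c)
    (hbot : Tendsto z atBot (𝓝 (Real.log a, 0))) (htop : Tendsto z atTop (𝓝 (Real.log b, 0))) :
    ∃ P Q : ℝ → ℝ, (∀ y, 0 < P y) ∧ (∀ y, HasDerivAt P (Q y) y) ∧
      (∀ y, HasDerivAt Q (f (P y) - c * Q y + Q y ^ 2 / P y) y) ∧
      Tendsto (fun y => (P y, Q y)) atBot (𝓝 (a, 0)) ∧
      Tendsto (fun y => (P y, Q y)) atTop (𝓝 (b, 0)) := by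
  obtain ⟨hu, hw⟩ := isIntegralCurve_dampedField_iff.1 hz
  have hΦ : Continuous fun w : ℝ × ℝ => (Real.exp w.1, Real.exp w.1 * w.2) := by fun_prop
  refine ⟨fun y => Real.exp (z y).1, fun y => Real.exp (z y).1 * (z y).2,
    fun y => Real.exp_pos _, fun y => (hu y).exp, fun y => ?_, ?_, ?_⟩
  · refine ((hu y).exp.mul (hw y)).congr_deriv ?_
    simp only [logForce, Real.exp_neg]
    field_simp
    ring
  · simpa [Real.exp_log ha, Function.comp_def] using (hΦ.tendsto _).comp hbot
  · simpa [Real.exp_log hb, Function.comp_def] using (hΦ.tendsto _).comp htop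

lemma tendsto_intervalIntegral_atBot_atTop {g : ℝ → ℝ} (hg : Continuous g)
    (hlim : Tendsto g atBot atTop) (b : ℝ) :
    Tendsto (fun a => ∫ u in a..b, g u) atBot atTop := by
  obtain ⟨m, hm⟩ := eventually_atBot.1 (hlim.eventually_ge_atTop 1)
  refine tendsto_atTop_mono' atBot ?_ (tendsto_atTop_add_const_right atBot
    (m + ∫ u in m..b, g u) tendsto_neg_atBot_atTop)
  filter_upwards [eventually_le_atBot m] with a ham
  have htail : ∫ _ in a..m, (1 : ℝ) ≤ ∫ u in a..m, g u :=
    intervalIntegral.integral_mono_on ham (by simp) (hg.intervalIntegrable _ _)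
      fun u hu => hm u hu.2
  rw [intervalIntegral.integral_const, smul_eq_mul, mul_one] at htail
  rw [← intervalIntegral.integral_add_adjacent_intervals (hg.intervalIntegrable a m)
    (hg.intervalIntegrable m b)]
  linarith

end LogarithmicProfile

section ProfileF

variable {γ a b P : ℝ}

lemma profileF_comm (γ a b P : ℝ) : profileF γ a b P = profileF γ b a P := by
  unfold profileF
  rw [← neg_sub (a ^ γ) (b ^ γ), ← neg_sub a b, ← neg_sub (a ^ (γ + 1)) (b ^ (γ + 1)),
    neg_div_neg_eq, neg_div_neg_eq, mul_comm b a]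

lemma profileF_left (ha : 0 < a) (hb : 0 < b) (hab : a ≠ b) : profileF γ a b a = 0 := by
  have hba : b - a ≠ 0 := sub_ne_zero.2 hab.symm
  rw [profileF, Real.rpow_add_one ha.ne', Real.rpow_add_one hb.ne']
  field_simp
  ring

lemma profileF_right (ha : 0 < a) (hb : 0 < b) (hab : a ≠ b) : profileF γ a b b = 0 :=
  profileF_comm γ a b b ▸ profileF_left hb ha hab.symm

lemma mul_profileF (hP : 0 < P) : P * profileF γ a b P =
    P ^ (γ + 1) - (b ^ (γ + 1) - a ^ (γ + 1)) / (b - a) * P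
      + a * b * ((b ^ γ - a ^ γ) / (b - a)) := by
  rw [profileF, Real.rpow_add_one hP.ne']
  field_simp
  ring

-- `P * profileF γ a b P` is `P ^ (γ + 1)` minus its chord between `a` and `b`.
lemma strictConvexOn_mul_profileF (hγ : 0 < γ) :
    StrictConvexOn ℝ (Ioi 0) fun P => P * profileF γ a b P := by
  have hpow : StrictConvexOn ℝ (Ioi 0) fun P : ℝ => P ^ (γ + 1) :=
    (strictConvexOn_rpow (by linarith)).subset Ioi_subset_Ici_self (convex_Ioi 0)
  have hlin := ((LinearMap.mulLeft ℝ (-((b ^ (γ + 1) - a ^ (γ + 1)) / (b - a)))).convexOn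
    (convex_Ioi 0)).add_const (a * b * ((b ^ γ - a ^ γ) / (b - a)))
  refine (hpow.add_convexOn hlin).congr fun P hP => ?_
  rw [mul_profileF hP]
  simp only [Pi.add_apply, LinearMap.mulLeft_apply]
  ring

lemma profileF_neg (hγ : 0 < γ) (ha : 0 < a) (hP : P ∈ Ioo a b) : profileF γ a b P < 0 := by
  have hab : a < b := hP.1.trans hP.2
  have hb : 0 < b := ha.trans hab
  have hlt := (strictConvexOn_mul_profileF hγ (a := a) (b := b)).lt_on_openSegment (mem_Ioi.2 ha)
    (mem_Ioi.2 hb) hab.ne (openSegment_eq_Ioo hab ▸ hP)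
  simp only [profileF_left ha hb hab.ne, profileF_right ha hb hab.ne, mul_zero, max_self] at hlt
  exact neg_of_mul_neg_right hlt (ha.trans hP.1).le

lemma profileF_pos (hγ : 0 < γ) (hab : a < b) (hP : P ∈ Ioo 0 a) : 0 < profileF γ a b P := by
  have ha : 0 < a := hP.1.trans hP.2
  have hb : 0 < b := ha.trans hab
  have hPb : P < b := hP.2.trans hab
  have hmem : a ∈ openSegment ℝ P b := by
    rw [openSegment_eq_Ioo hPb]
    exact ⟨hP.2, hab⟩
  have hlt := (strictConvexOn_mul_profileF hγ (a := a) (b := b)).lt_on_openSegment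
    (mem_Ioi.2 hP.1) (mem_Ioi.2 hb) hPb.ne hmem
  simp only [profileF_left ha hb hab.ne, profileF_right ha hb hab.ne, mul_zero, lt_max_iff,
    lt_irrefl, or_false] at hlt
  exact pos_of_mul_pos_right hlt hP.1.le

lemma contDiff_logForce_profileF {κ : ℝ} :
    ContDiff ℝ 1 (logForce fun P => κ * profileF γ a b P) := by
  have hpow : ContDiff ℝ 1 fun u => Real.exp u ^ γ :=
    Real.contDiff_exp.rpow_const_of_ne fun u => (Real.exp_pos u).ne'
  have hinv : ContDiff ℝ 1 fun u => a * b / Real.exp u :=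
    contDiff_const.div Real.contDiff_exp fun u => (Real.exp_pos u).ne'
  unfold logForce profileF
  fun_prop

lemma tendsto_logForce_profileF_atBot {κ : ℝ} (hκ : 0 < κ) (hγ : 0 < γ) (ha : 0 < a) (hab : a < b) :
    Tendsto (logForce fun P => κ * profileF γ a b P) atBot atTop := by
  have hb : 0 < b := ha.trans hab
  have hα : 0 < a * b * ((b ^ γ - a ^ γ) / (b - a)) := mul_pos (mul_pos ha hb)
    (div_pos (sub_pos.2 (Real.rpow_lt_rpow ha.le hab hγ)) (sub_pos.2 hab))
  have hlim : Tendsto (fun u => Real.exp u * profileF γ a b (Real.exp u)) atBot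
      (𝓝 (a * b * ((b ^ γ - a ^ γ) / (b - a)))) := by
    simp only [mul_profileF (Real.exp_pos _)]
    have hpow := (Real.continuousAt_rpow_const 0 (γ + 1) (Or.inr (by positivity))).tendsto.comp
      Real.tendsto_exp_atBot
    simpa [Real.zero_rpow (by positivity : γ + 1 ≠ 0)] using
      (hpow.sub (Real.tendsto_exp_atBot.const_mul _)).add_const _
  have hexp : Tendsto (fun u => Real.exp (-u) * Real.exp (-u)) atBot atTop :=
    (Real.tendsto_exp_atTop.comp tendsto_neg_atBot_atTop).atTop_mul_atTop₀
      (Real.tendsto_exp_atTop.comp tendsto_neg_atBot_atTop)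
  refine ((hlim.const_mul κ).pos_mul_atTop (mul_pos hκ hα) hexp).congr fun u => ?_
  simp only [logForce, Real.exp_neg]
  field_simp

lemma exists_isPotentialWell_logForce_profileF {κ : ℝ} (hκ : 0 < κ) (hγ : 0 < γ) (ha : 0 < a)
    (hab : a < b) :
    ∃ l, IsPotentialWell (logForce fun P => κ * profileF γ a b P) l (Real.log a) (Real.log b) := by
  have hb : 0 < b := ha.trans hab
  obtain ⟨l, hl, hint⟩ := ((eventually_lt_atBot (Real.log a)).and
    ((tendsto_intervalIntegral_atBot_atTop contDiff_logForce_profileF.continuous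
      (tendsto_logForce_profileF_atBot hκ hγ ha hab) (Real.log b)).eventually_ge_atTop 0)).exists
  refine ⟨l, hl, Real.log_lt_log ha hab, fun u hu => ?_, fun u hu => ?_, ?_, hint⟩
  · exact mul_pos (mul_pos hκ (profileF_pos hγ hab
      ⟨Real.exp_pos u, (Real.lt_log_iff_exp_lt ha).1 hu.2⟩)) (Real.exp_pos _)
  · exact mul_neg_of_neg_of_pos (mul_neg_of_pos_of_neg hκ (profileF_neg hγ ha
      ⟨(Real.log_lt_iff_lt_exp ha).1 hu.1, (Real.lt_log_iff_exp_lt hb).1 hu.2⟩)) (Real.exp_pos _)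
  · simp only [logForce, Real.exp_log hb, profileF_right ha hb hab.ne, mul_zero, zero_mul]

theorem exists_heteroclinic_logForce_profileF {κ c : ℝ} (hκ : 0 < κ) (hγ : 0 < γ) (ha : 0 < a)
    (hab : a < b) (hc : 0 < c) :
    ∃ z : ℝ → ℝ × ℝ,
      (IsIntegralCurve z fun _ => dampedField (logForce fun P => κ * profileF γ a b P) c) ∧
      Tendsto z atBot (𝓝 (Real.log b, 0)) ∧ Tendsto z atTop (𝓝 (Real.log a, 0)) := by
  obtain ⟨l, hwell⟩ := exists_isPotentialWell_logForce_profileF hκ hγ ha hab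
  obtain ⟨K, hK⟩ := contDiff_logForce_profileF.contDiffOn.exists_lipschitzOnWith one_ne_zero
    (convex_Icc l (Real.log b)) isCompact_Icc
  exact hwell.exists_heteroclinic hK hc

end ProfileF

theorem stmt_2_general (γ μ k Pm s Pp : ℝ) (hγ : 0 < γ) (hμ : 0 < μ) (hk : k ≠ 0) (hPm : 0 < Pm)
    (hPp : 0 < Pp) (h : (0 < s ∧ Pp < Pm) ∨ (s < 0 ∧ Pm < Pp)) :
    ∃ P Q : ℝ → ℝ,
      (∀ y : ℝ, 0 < P y) ∧
      (∀ y : ℝ, HasDerivAt P (Q y) y) ∧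
      (∀ y : ℝ, HasDerivAt Q
        (2 / k ^ 2 * profileF γ Pm Pp (P y) - 2 * μ * s / k ^ 2 * Q y + (Q y) ^ 2 / P y) y) ∧
      Tendsto (fun y => (P y, Q y)) atBot (𝓝 (Pm, 0)) ∧
      Tendsto (fun y => (P y, Q y)) atTop (𝓝 (Pp, 0)) := by
  have hκ : 0 < 2 / k ^ 2 := by positivity
  suffices ∃ z : ℝ → ℝ × ℝ, (IsIntegralCurve z fun _ => dampedField
      (logForce fun P => 2 / k ^ 2 * profileF γ Pm Pp P) (2 * μ * s / k ^ 2)) ∧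
      Tendsto z atBot (𝓝 (Real.log Pm, 0)) ∧ Tendsto z atTop (𝓝 (Real.log Pp, 0)) by
    obtain ⟨z, hz, hbot, htop⟩ := this
    exact exists_profile_of_isIntegralCurve_logForce hPm hPp hz hbot htop
  rcases h with ⟨hs, hlt⟩ | ⟨hs, hlt⟩
  · simp only [profileF_comm γ Pm Pp]
    exact exists_heteroclinic_logForce_profileF hκ hγ hPp hlt (by positivity)
  · have hc : 0 < -(2 * μ * s / k ^ 2) := by
      rw [neg_pos]
      exact div_neg_of_neg_of_pos (mul_neg_of_pos_of_neg (by positivity) hs) (by positivity)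
    obtain ⟨z, hz, hbot, htop⟩ := exists_heteroclinic_logForce_profileF hκ hγ hPm hlt hc
    exact ⟨timeReversal z, neg_neg (2 * μ * s / k ^ 2) ▸ isIntegralCurve_timeReversal hz,
      tendsto_timeReversal tendsto_neg_atBot_atTop htop,
      tendsto_timeReversal tendsto_neg_atTop_atBot hbot⟩

/-- local (small-amplitude) existence of traveling wave profiles: for any
`P⁻ > 0` there is `ε > 0` such that for every speed `s` and state `P⁺ > 0` with
`|P⁺ − P⁻| < ε` and (`s > 0`, `P⁺ < P⁻`) or (`s < 0`, `P⁻ < P⁺`), the planar profile system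
`P' = Q`, `Q' = (2/k²)f(P) − (2μs/k²)Q + Q²/P` has a heteroclinic connecting `(P⁻,0)` to
`(P⁺,0)`. -/
theorem stmt_2 (γ μ k Pm : ℝ) (hγ : 1 ≤ γ) (hμ : 0 < μ) (hk : 0 < k) (hPm : 0 < Pm) :
    ∃ ε > 0, ∀ s Pp : ℝ, 0 < Pp → |Pp - Pm| < ε →
      ((0 < s ∧ Pp < Pm) ∨ (s < 0 ∧ Pm < Pp)) →
      ∃ P Q : ℝ → ℝ,
        (∀ y : ℝ, 0 < P y) ∧
        (∀ y : ℝ, HasDerivAt P (Q y) y) ∧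
        (∀ y : ℝ, HasDerivAt Q
          (2 / k ^ 2 * profileF γ Pm Pp (P y) - 2 * μ * s / k ^ 2 * Q y + (Q y) ^ 2 / P y) y) ∧
        Tendsto (fun y => (P y, Q y)) atBot (𝓝 (Pm, 0)) ∧
        Tendsto (fun y => (P y, Q y)) atTop (𝓝 (Pp, 0)) :=
  ⟨1, one_pos, fun s Pp hPp _ h =>
    stmt_2_general γ μ k Pm s Pp (zero_lt_one.trans_le hγ) hμ hk.ne' hPm hPp h⟩
end

section
/- Let γ ≥ 1, s > 0, μ, k > 0, and let 0 < P⁺ < P⁻ be the two positive roots of f(P) = P^γ − C₁ + C₂/P, where C₁ = ((P⁺)^{γ+1} − (P⁻)^{γ+1})/(P⁺ − P⁻) and C₂ = P⁺P⁻·((P⁺)^γ − (P⁻)^γ)/(P⁺ − P⁻). Define F(P) = P^{γ+1}/(γ+1) − C₁P + C₂·ln P and F₁(P) = F(P) − (sμP/k)² − F(P⁻). If F₁(P) ≤ 0 for all 0 < P < P⁺, then there exists a heteroclinic solution of the system P' = (2/k²)Q̃, Q̃' = f(P) − (2μs/k²)Q̃ + (2/k²)Q̃²/P connecting (P⁻,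 0) to (P⁺, 0): a C¹ solution (P, Q̃) : ℝ → (0,∞) × ℝ defined for all y ∈ ℝ with (P(y), Q̃(y)) → (P⁻, 0) as y → −∞ and (P(y), Q̃(y)) → (P⁺, 0) as y → +∞. -/
open Filter Topology

/-!
Along solutions of the profile system the energy `F(P) - (Q / k)²` has derivative
`(2 / k²)² Q² (s μ - Q / P)`, so it increases in the sector `|Q| ≤ s μ P`. The hypothesis `F₁ ≤ 0`
says that the part of the superlevel set `{energy > F(P⁻)}` over `(0, P⁻)` lies inside this sector,
and the logarithm in `F` keeps it away from `P = 0`; hence it is forward invariant and has compact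
closure.

In this closure the only orbits of constant energy are the equilibria `(P⁻, 0)` and `(P⁺, 0)`, so
by LaSalle's principle every orbit with energy above `F(P⁻)` tends to `(P⁺, 0)`. To obtain the
limit at `-∞`, start such orbits ever closer to `(P⁻, 0)` and look at the points where they cross an
intermediate energy level. The times needed to get there tend to infinity, so through a cluster
point of the crossing points runs an orbit that stays in the closure for all negative times as well;
its energy being below that level in the past, it comes from `(P⁻, 0)`.

The vector field is clamped to a rectangle containing the region, so that it has a global flow.
-/

namespace TravelingWave

open Set
open scoped NNReal

section LipschitzFlow

variable {E : Type*} [NormedAddCommGroup E] [NormedSpace ℝ E] {V : E → E} {K : ℝ≥0}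

lemma dist_le_of_isIntegralCurve_of_nonneg (hV : LipschitzWith K V) {u v : ℝ → E}
    (hu : IsIntegralCurve u fun _ => V) (hv : IsIntegralCurve v fun _ => V) {t : ℝ} (ht : 0 ≤ t) :
    dist (u t) (v t) ≤ dist (u 0) (v 0) * Real.exp (K * t) := by
  simpa only [sub_zero] using dist_le_of_trajectories_ODE (fun _ => hV) hu.continuous.continuousOn
    (fun s _ => (hu s).hasDerivWithinAt) hv.continuous.continuousOn
    (fun s _ => (hv s).hasDerivWithinAt) le_rfl t (right_mem_Icc.2 ht)

lemma dist_le_of_isIntegralCurve (hV : LipschitzWith K V) {u v : ℝ → E}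
    (hu : IsIntegralCurve u fun _ => V) (hv : IsIntegralCurve v fun _ => V) (t : ℝ) :
    dist (u t) (v t) ≤ dist (u 0) (v 0) * Real.exp (K * |t|) := by
  rcases le_total 0 t with ht | ht
  · simpa only [abs_of_nonneg ht] using dist_le_of_isIntegralCurve_of_nonneg hV hu hv ht
  · have hV' : LipschitzWith K ((-1 : ℝ) • V) := fun x y => by simpa using hV x y
    simpa [abs_of_nonpos ht] using dist_le_of_isIntegralCurve_of_nonneg hV'
      (hu.comp_mul (-1)) (hv.comp_mul (-1)) (neg_nonneg.2 ht)

lemma exists_isIntegralCurveOn_Ioo [CompleteSpace E] (hV : LipschitzWith K V) {L : ℝ≥0}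
    (hL : ∀ x, ‖V x‖ ≤ L) (x : E) {r : ℝ} (hr : 0 < r) :
    ∃ u : ℝ → E, u 0 = x ∧ IsIntegralCurveOn u (fun _ => V) (Ioo (-r) r) := by
  lift r to ℝ≥0 using hr.le
  have hPicard : IsPicardLindelof (fun _ => V)
      (⟨0, neg_nonpos.2 hr.le, hr.le⟩ : Icc (-(r : ℝ)) r) x (L * r) 0 L K :=
    { lipschitzOnWith := fun _ _ => hV.lipschitzOnWith
      continuousOn := fun _ _ => continuousOn_const
      norm_le := fun _ _ y _ => hL y
      mul_max_le := by simp }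
  obtain ⟨u, hu₀, hu⟩ := hPicard.exists_eq_forall_mem_Icc_hasDerivWithinAt₀
  exact ⟨u, hu₀, IsIntegralCurveOn.mono hu Ioo_subset_Icc_self⟩

lemma eqOn_of_isIntegralCurveOn_Ioo (hV : LipschitzWith K V) {u v : ℝ → E} {r : ℝ} (hr : 0 < r)
    (hu : IsIntegralCurveOn u (fun _ => V) (Ioo (-r) r))
    (hv : IsIntegralCurveOn v (fun _ => V) (Ioo (-r) r)) (huv : u 0 = v 0) :
    EqOn u v (Ioo (-r) r) :=
  ODE_solution_unique_of_mem_Ioo (s := fun _ => univ) (fun _ _ => hV.lipschitzOnWith)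
    ⟨neg_lt_zero.2 hr, hr⟩
    (fun t ht => ⟨(hu t ht).hasDerivAt (Ioo_mem_nhds ht.1 ht.2), mem_univ _⟩)
    (fun t ht => ⟨(hv t ht).hasDerivAt (Ioo_mem_nhds ht.1 ht.2), mem_univ _⟩) huv

lemma exists_isIntegralCurve [CompleteSpace E] (hV : LipschitzWith K V) {L : ℝ≥0}
    (hL : ∀ x, ‖V x‖ ≤ L) (x : E) : ∃ u : ℝ → E, u 0 = x ∧ IsIntegralCurve u fun _ => V := by
  choose! U hU₀ hU using fun r : ℝ => exists_isIntegralCurveOn_Ioo hV hL x (r := r)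
  have hpos (t : ℝ) : 0 < |t| + 1 := by positivity
  have hagree {r R : ℝ} (hr : 0 < r) (hrR : r ≤ R) : EqOn (U r) (U R) (Ioo (-r) r) :=
    have hR := hr.trans_le hrR
    eqOn_of_isIntegralCurveOn_Ioo hV hr (hU r hr)
      ((hU R hR).mono (Ioo_subset_Ioo (neg_le_neg hrR) hrR)) ((hU₀ r hr).trans (hU₀ R hR).symm)
  have hglue {r : ℝ} (hr : 0 < r) : EqOn (fun t => U (|t| + 1) t) (U r) (Ioo (-r) r) := by
    intro t ht
    rcases le_total (|t| + 1) r with h | h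
    · exact hagree (hpos t) h (abs_lt.1 (lt_add_one |t|))
    · exact (hagree hr h ht).symm
  refine ⟨fun t => U (|t| + 1) t, hU₀ _ (hpos 0), fun t => ?_⟩
  have ht : Ioo (-(|t| + 1)) (|t| + 1) ∈ 𝓝 t :=
    Ioo_mem_nhds (abs_lt.1 (lt_add_one |t|)).1 (abs_lt.1 (lt_add_one |t|)).2
  exact ((hU _ (hpos t) t (mem_of_mem_nhds ht)).hasDerivAt ht).congr_of_eventuallyEq
    ((hglue (hpos t)).eventuallyEq_of_mem ht)

theorem exists_flow_of_lipschitzWith [CompleteSpace E] (hV : LipschitzWith K V) {L : ℝ≥0}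
    (hL : ∀ x, ‖V x‖ ≤ L) :
    ∃ φ : Flow ℝ E, ∀ x, IsIntegralCurve (fun t => φ t x) fun _ => V := by
  choose U hU₀ hU using exists_isIntegralCurve hV hL
  have hlip (t : ℝ) : LipschitzWith (Real.exp (K * |t|)).toNNReal fun x => U x t :=
    LipschitzWith.of_dist_le_mul fun x y => by
      simpa only [hU₀, Real.coe_toNNReal _ (Real.exp_pos _).le, mul_comm]
        using dist_le_of_isIntegralCurve hV (hU x) (hU y) t
  have hcont : Continuous fun p : ℝ × E => U p.2 p.1 := by
    refine continuous_iff_continuousAt.2 fun p => ?_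
    have hbound : ∀ t ∈ Ioo (-(|p.1| + 1)) (|p.1| + 1),
        LipschitzOnWith (Real.exp (K * (|p.1| + 1))).toNNReal (fun x => U x t) univ :=
      fun t ht => ((hlip t).weaken (Real.toNNReal_le_toNNReal (by
        have := (abs_lt.2 ht).le
        gcongr))).lipschitzOnWith
    refine (continuousOn_prod_of_continuousOn_lipschitzOnWith' (fun p : ℝ × E => U p.2 p.1) _
      hbound fun x _ => (hU x).continuous.continuousOn).continuousAt (prod_mem_nhds ?_ univ_mem)
    exact Ioo_mem_nhds (abs_lt.1 (lt_add_one _)).1 (abs_lt.1 (lt_add_one _)).2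
  have hadd (t₁ t₂ : ℝ) (x : E) : U x (t₁ + t₂) = U (U x t₂) t₁ :=
    congrFun (ODE_solution_unique_univ (s := fun _ => univ) (t₀ := 0)
      (fun _ => hV.lipschitzOnWith) (fun t => ⟨(hU x).comp_add t₂ t, mem_univ _⟩)
      (fun t => ⟨hU (U x t₂) t, mem_univ _⟩) (by simp [hU₀])) t₁
  exact ⟨⟨fun t x => U x t, hcont, hadd, hU₀⟩, hU⟩

end LipschitzFlow

lemma flow_apply_eq_self_of_apply_eq_zero {E : Type*} [NormedAddCommGroup E] [NormedSpace ℝ E]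
    {V : E → E} {K : ℝ≥0} (hV : LipschitzWith K V) {φ : Flow ℝ E}
    (hφ : ∀ x, IsIntegralCurve (fun t => φ t x) fun _ => V) {x : E} (hx : V x = 0) (t : ℝ) :
    φ t x = x :=
  dist_le_zero.1 <| by
    simpa using dist_le_of_isIntegralCurve hV (hφ x) (isIntegralCurve_const fun _ => hx) t

instance hasSolidNorm_prod {E F : Type*} [NormedAddCommGroup E] [Lattice E] [HasSolidNorm E]
    [NormedAddCommGroup F] [Lattice F] [HasSolidNorm F] : HasSolidNorm (E × F) where
  solid _ _ h := max_le_max (HasSolidNorm.solid h.1) (HasSolidNorm.solid h.2)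

section OrderInterval

variable {E : Type*} [NormedAddCommGroup E] [NormedSpace ℝ E] [Lattice E] [HasSolidNorm E]
  [IsOrderedAddMonoid E] [IsOrderedModule ℝ E] [CompactIccSpace E]

lemma exists_lipschitzWith_norm_le_eqOn_Icc {F : Type*} [NormedAddCommGroup F] [NormedSpace ℝ F]
    {G : E → F} {a b : E} (hab : a ≤ b) (hG : ContDiffOn ℝ 1 G (Icc a b)) :
    ∃ (V : E → F) (K L : ℝ≥0), LipschitzWith K V ∧ (∀ x, ‖V x‖ ≤ L) ∧ EqOn V G (Icc a b) := by
  have hclamp_mem (x : E) : x ⊓ b ⊔ a ∈ Icc a b := ⟨le_sup_right, sup_le inf_le_right hab⟩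
  have hclamp_lip : LipschitzWith (1 * 1) fun x : E => x ⊓ b ⊔ a :=
    (lipschitzWith_sup_right a).comp <| LipschitzWith.mk_one fun x y => by
      simpa only [dist_eq_norm] using norm_inf_sub_inf_le_norm x y b
  obtain ⟨K, hK⟩ := hG.exists_lipschitzOnWith one_ne_zero (convex_Icc a b) isCompact_Icc
  obtain ⟨L, hL⟩ := isCompact_Icc.exists_bound_of_continuousOn hG.continuousOn
  refine ⟨fun x => G (x ⊓ b ⊔ a), K * (1 * 1), L.toNNReal, ?_, fun x => ?_, fun x hx => ?_⟩
  · exact lipschitzOnWith_univ.1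
      (hK.comp hclamp_lip.lipschitzOnWith fun x _ => hclamp_mem x)
  · exact (hL _ (hclamp_mem x)).trans (Real.le_coe_toNNReal L)
  · simp only [inf_of_le_left hx.2, sup_of_le_left hx.1]

theorem exists_flow_hasDerivAt_of_contDiffOn_Icc [CompleteSpace E] {G : E → E} {a b : E}
    (hab : a ≤ b) (hG : ContDiffOn ℝ 1 G (Icc a b)) :
    ∃ φ : Flow ℝ E, (∀ x t, φ t x ∈ Icc a b → HasDerivAt (fun t => φ t x) (G (φ t x)) t) ∧
      ∀ x ∈ Icc a b, G x = 0 → ∀ t, φ t x = x := by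
  obtain ⟨V, K, L, hV, hL, hVG⟩ := exists_lipschitzWith_norm_le_eqOn_Icc hab hG
  obtain ⟨φ, hφ⟩ := exists_flow_of_lipschitzWith hV hL
  refine ⟨φ, fun x t hx => hVG hx ▸ hφ x t, fun x hx hx₀ =>
    flow_apply_eq_self_of_apply_eq_zero hV hφ ((hVG hx).trans hx₀)⟩

end OrderInterval

section GradientLikeFlow

variable {X : Type*} [TopologicalSpace X]

lemma forall_nonneg_mem_of_forall_Ico_mem {u : ℝ → X} (hu : Continuous u) {U : Set X}
    (hU : IsOpen U) (hu₀ : u 0 ∈ U) (hexit : ∀ τ > 0, (∀ t ∈ Ico 0 τ, u t ∈ U) → u τ ∈ U)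
    {t : ℝ} (ht : 0 ≤ t) : u t ∈ U := by
  by_contra htU
  let B : Set ℝ := Ici 0 ∩ u ⁻¹' Uᶜ
  have hB_bdd : BddBelow B := ⟨0, fun s hs => hs.1⟩
  have hτ : sInf B ∈ B :=
    (isClosed_Ici.inter (hU.isClosed_compl.preimage hu)).csInf_mem ⟨t, ht, htU⟩ hB_bdd
  have hτ_pos : 0 < sInf B := hτ.1.lt_of_ne fun h => hτ.2 (h ▸ hu₀)
  refine hτ.2 (hexit _ hτ_pos fun s hs => ?_)
  by_contra hsU
  exact hs.2.not_ge (csInf_le hB_bdd ⟨hs.1, hsU⟩)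

variable {φ : Flow ℝ X} {S : Set X} {H : X → ℝ}

lemma orbit_mem_and_eq_of_mem_omegaLimit {l : Filter ℝ} (hl : ∀ t, Tendsto (t + ·) l l)
    (hS : IsClosed S) (hH : ContinuousOn H S) {x : X} (hxS : ∀ᶠ t in l, φ t x ∈ S) {h : ℝ}
    (hh : Tendsto (fun t => H (φ t x)) l (𝓝 h)) {z : X} (hz : z ∈ omegaLimit l φ {x}) (t : ℝ) :
    φ t z ∈ S ∧ H (φ t z) = h := by
  obtain ⟨U, hUl, hU⟩ := mapClusterPt_iff_ultrafilter.1
    ((mem_omegaLimit_singleton_iff_mapClusterPt l φ x _).1 (φ.isInvariant_omegaLimit l {x} hl t hz))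
  have hUS : ∀ᶠ t in U, φ t x ∈ S := hUl hxS
  have hwS : φ t z ∈ S := hS.mem_of_tendsto hU hUS
  exact ⟨hwS, tendsto_nhds_unique ((hH _ hwS).tendsto.comp (tendsto_nhdsWithin_iff.2 ⟨hU, hUS⟩))
    (hh.mono_left hUl)⟩

lemma tendsto_of_forall_orbit_eq [T2Space X] {l : Filter ℝ} (hl : ∀ t, Tendsto (t + ·) l l)
    (hS : IsCompact S) (hH : ContinuousOn H S) {x : X} (hxS : ∀ᶠ t in l, φ t x ∈ S) {h : ℝ}
    (hh : Tendsto (fun t => H (φ t x)) l (𝓝 h)) {z : X}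
    (hz : ∀ w, (∀ t, φ t w ∈ S ∧ H (φ t w) = h) → w = z) :
    Tendsto (fun t => φ t x) l (𝓝 z) :=
  hS.tendsto_nhds_of_unique_mapClusterPt hxS fun w _ hw =>
    hz w (orbit_mem_and_eq_of_mem_omegaLimit hl hS.isClosed hH hxS hh
      ((mem_omegaLimit_singleton_iff_mapClusterPt l φ x w).2 hw))

lemma tendsto_transit_time_atTop {z : X} (hz : ∀ t, φ t z = z) (hH : ContinuousWithinAt H S z)
    {U : Ultrafilter X} (hU : ↑U ≤ 𝓝 z) {T : X → ℝ} (hT₀ : ∀ᶠ x in U, 0 ≤ T x)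
    (hTS : ∀ᶠ x in U, φ (T x) x ∈ S) {m : ℝ} (hTm : ∀ᶠ x in U, H (φ (T x) x) = m)
    (hm : H z ≠ m) : Tendsto T U atTop := by
  refine tendsto_atTop.2 fun R => ?_
  by_contra hR
  have hT_mem : ∀ᶠ x in U, T x ∈ Icc 0 R := by
    filter_upwards [hT₀, Ultrafilter.eventually_not.2 hR] with x h₀ h using ⟨h₀, (not_le.1 h).le⟩
  obtain ⟨t, -, ht⟩ := isCompact_Icc.ultrafilter_le_nhds (U.map T) (le_principal_iff.2 hT_mem)
  have hTz : Tendsto (fun x => φ (T x) x) U (𝓝 z) := by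
    simpa only [Function.comp_def, Function.uncurry_apply_pair, hz, id] using
      (φ.cont'.tendsto (t, z)).comp
        (Tendsto.prodMk_nhds (show Tendsto T U (𝓝 t) from ht) (show Tendsto id ↑U (𝓝 z) from hU))
  exact hm (tendsto_nhds_unique_of_eventuallyEq
    (hH.tendsto.comp (tendsto_nhdsWithin_iff.2 ⟨hTz, hTS⟩)) tendsto_const_nhds hTm)

lemma exists_orbit_mem_of_frequently_crossing [T2Space X] (hS : IsCompact S)
    (hSφ : IsForwardInvariant φ S) (hH : ContinuousOn H S) {z : X} (hzS : z ∈ S)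
    (hz : ∀ t, φ t z = z) {m : ℝ} (hm : H z ≠ m) (hcross : ∃ᶠ x in 𝓝[S] z, ∃ T ≥ 0, H (φ T x) = m) :
    ∃ y, H y = m ∧ ∀ t, φ t y ∈ S := by
  choose! T hT₀ hTm using fun x (hx : ∃ T ≥ 0, H (φ T x) = m) => hx
  obtain ⟨U, hU⟩ := exists_ultrafilter_iff.2 (frequently_mem_iff_neBot.1 hcross)
  have hUz : ↑U ≤ 𝓝[S] z := hU.trans inf_le_left
  have hUS : ∀ᶠ x in U, x ∈ S := hUz self_mem_nhdsWithin
  have hUT : ∀ᶠ x in U, ∃ T ≥ 0, H (φ T x) = m := hU.trans inf_le_right (mem_principal_self _)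
  have hHm : ∀ᶠ x in U, H (φ (T x) x) = m := hUT.mono hTm
  have hTS : ∀ᶠ x in U, φ (T x) x ∈ S := by
    filter_upwards [hUT, hUS] with x hx hxS using hSφ (hT₀ x hx) hxS
  have hTtop : Tendsto T U atTop :=
    tendsto_transit_time_atTop hz (hH z hzS) (hUz.trans nhdsWithin_le_nhds) (hUT.mono hT₀)
      hTS hHm hm
  obtain ⟨y, hyS, hy⟩ := hS.ultrafilter_le_nhds (U.map fun x => φ (T x) x) (le_principal_iff.2 hTS)
  refine ⟨y, tendsto_nhds_unique_of_eventuallyEq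
    ((hH y hyS).tendsto.comp (tendsto_nhdsWithin_iff.2 ⟨hy, hTS⟩)) tendsto_const_nhds hHm,
    fun t => hS.isClosed.mem_of_tendsto (((φ.continuous_toFun t).tendsto y).comp hy) ?_⟩
  filter_upwards [hTtop.eventually_ge_atTop (-t), hUS] with x hx hxS
  rw [Function.comp_apply, ← φ.map_add]
  exact hSφ (by linarith) hxS

lemma tendsto_atTop_of_lyapunov [T2Space X] (hS : IsCompact S) (hSφ : IsForwardInvariant φ S)
    (hH : ContinuousOn H S) (hmono : ∀ x ∈ S, ∀ t ≥ 0, H x ≤ H (φ t x)) {x z : X} (hx : x ∈ S)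
    (hz : ∀ w, (∀ t, φ t w ∈ S) → (∀ t, H (φ t w) = H w) → H x ≤ H w → w = z) :
    Tendsto (fun t => φ t x) atTop (𝓝 z) := by
  have hxS (t : ℝ) : φ (max t 0) x ∈ S := hSφ (le_max_right t 0) hx
  have hmono' : Monotone fun t => H (φ (max t 0) x) := fun s t hst => by
    have := hmono _ (hxS s) (max t 0 - max s 0) (sub_nonneg.2 (max_le_max_right 0 hst))
    rwa [← φ.map_add, sub_add_cancel] at this
  have hbdd : BddAbove (range fun t => H (φ (max t 0) x)) :=
    (hS.bddAbove_image hH).mono (range_subset_iff.2 fun t => mem_image_of_mem H (hxS t))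
  have hlim := (tendsto_atTop_ciSup hmono' hbdd).congr'
    ((eventually_ge_atTop 0).mono fun t ht => by rw [max_eq_left ht])
  refine tendsto_of_forall_orbit_eq (fun t => tendsto_atTop_add_const_left _ t tendsto_id) hS hH
    ((eventually_ge_atTop 0).mono fun t ht => hSφ ht hx) hlim fun w hw => ?_
  have hHw : H w = ⨆ t, H (φ (max t 0) x) := by simpa using (hw 0).2
  refine hz w (fun t => (hw t).1) (fun t => (hw t).2.trans hHw.symm) (hHw ▸ ?_)
  simpa using le_ciSup hbdd 0

lemma tendsto_atBot_of_lyapunov [T2Space X] (hS : IsCompact S)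
    (hH : ContinuousOn H S) (hmono : ∀ x ∈ S, ∀ t ≥ 0, H x ≤ H (φ t x)) {x z : X}
    (hx : ∀ t, φ t x ∈ S)
    (hz : ∀ w, (∀ t, φ t w ∈ S) → (∀ t, H (φ t w) = H w) → H w ≤ H x → w = z) :
    Tendsto (fun t => φ t x) atBot (𝓝 z) := by
  have hmono' : Monotone fun t => H (φ t x) := fun s t hst => by
    have := hmono _ (hx s) (t - s) (sub_nonneg.2 hst)
    rwa [← φ.map_add, sub_add_cancel] at this
  have hbdd : BddBelow (range fun t => H (φ t x)) :=
    (hS.bddBelow_image hH).mono (range_subset_iff.2 fun t => mem_image_of_mem H (hx t))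
  refine tendsto_of_forall_orbit_eq (fun t => tendsto_atBot_add_const_left _ t tendsto_id) hS hH
    (Eventually.of_forall hx) (tendsto_atBot_ciInf hmono' hbdd) fun w hw => ?_
  have hHw : H w = ⨅ t, H (φ t x) := by simpa using (hw 0).2
  refine hz w (fun t => (hw t).1) (fun t => (hw t).2.trans hHw.symm) (hHw ▸ ?_)
  simpa using ciInf_le hbdd 0

lemma exists_crossing_of_tendsto {x z : X} (hS : IsClosed S) (hSφ : IsForwardInvariant φ S)
    (hH : ContinuousOn H S) (hx : x ∈ S) (hz : Tendsto (fun t => φ t x) atTop (𝓝 z)) {m : ℝ}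
    (hxm : H x ≤ m) (hm : m < H z) : ∃ T ≥ 0, H (φ T x) = m := by
  have hxS : ∀ t ∈ Ici (0 : ℝ), φ t x ∈ S := fun t ht => hSφ ht hx
  have hzS : z ∈ S := hS.mem_of_tendsto hz ((eventually_ge_atTop 0).mono hxS)
  have hcont : ContinuousOn (fun t => H (φ t x)) (Ici 0) :=
    hH.comp (by fun_prop) hxS
  have hlim : Tendsto (fun t => H (φ t x)) atTop (𝓝 (H z)) :=
    (hH z hzS).tendsto.comp (tendsto_nhdsWithin_iff.2 ⟨hz, (eventually_ge_atTop 0).mono hxS⟩)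
  obtain ⟨R, hR₀, hR⟩ := ((eventually_ge_atTop 0).and (hlim.eventually_const_lt hm)).exists
  obtain ⟨T, hT, hTm⟩ := intermediate_value_Icc hR₀ (hcont.mono Icc_subset_Ici_self)
    (show m ∈ Icc (H (φ 0 x)) (H (φ R x)) from ⟨by simpa using hxm, hR.le⟩)
  exact ⟨T, hT.1, hTm⟩

theorem exists_heteroclinic_of_lyapunov [T2Space X] (hS : IsCompact S)
    (hSφ : IsForwardInvariant φ S) (hH : ContinuousOn H S)
    (hmono : ∀ x ∈ S, ∀ t ≥ 0, H x ≤ H (φ t x)) {z₀ z₁ : X} (hz₀ : ∀ t, φ t z₀ = z₀)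
    (hz₀_mem : z₀ ∈ closure (S ∩ {x | H z₀ < H x})) (hz₀₁ : H z₀ < H z₁)
    (hLaSalle : ∀ w, (∀ t, φ t w ∈ S) → (∀ t, H (φ t w) = H w) → w = z₀ ∨ w = z₁) :
    ∃ y, (∀ t, φ t y ∈ S) ∧ Tendsto (fun t => φ t y) atBot (𝓝 z₀) ∧
      Tendsto (fun t => φ t y) atTop (𝓝 z₁) := by
  obtain ⟨m, hm₀, hm₁⟩ := exists_between hz₀₁
  have hz₀S : z₀ ∈ S := closure_minimal inter_subset_left hS.isClosed hz₀_mem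
  have htop {x : X} (hx : x ∈ S) (hHx : H z₀ < H x) : Tendsto (fun t => φ t x) atTop (𝓝 z₁) :=
    tendsto_atTop_of_lyapunov hS hSφ hH hmono hx fun w hwS hwH hw =>
      (hLaSalle w hwS hwH).resolve_left fun h => (hHx.trans_le hw).ne' (h ▸ rfl)
  have hcross : ∃ᶠ x in 𝓝[S] z₀, ∃ T ≥ 0, H (φ T x) = m := by
    have hfreq : ∃ᶠ x in 𝓝[S] z₀, H z₀ < H x := by
      rw [frequently_nhdsWithin_iff]
      exact (mem_closure_iff_frequently.1 hz₀_mem).mono fun x hx => ⟨hx.2, hx.1⟩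
    have hlow : ∀ᶠ x in 𝓝[S] z₀, x ∈ S ∧ H x < m :=
      eventually_mem_nhdsWithin.and ((hH z₀ hz₀S).eventually_lt_const hm₀)
    exact (hfreq.and_eventually hlow).mono fun x ⟨hHx, hxS, hxm⟩ =>
      exists_crossing_of_tendsto hS.isClosed hSφ hH hxS (htop hxS hHx) hxm.le hm₁
  obtain ⟨y, hym, hyS⟩ :=
    exists_orbit_mem_of_frequently_crossing hS hSφ hH hz₀S hz₀ hm₀.ne hcross
  have hy : y ∈ S := by simpa using hyS 0
  exact ⟨y, hyS, tendsto_atBot_of_lyapunov hS hH hmono hyS fun w hwS hwH hw =>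
    (hLaSalle w hwS hwH).resolve_right fun h => (hw.trans_lt (hym ▸ hm₁)).ne (h ▸ rfl),
    htop hy (hym ▸ hm₀)⟩

end GradientLikeFlow

section PhasePlane

/-- The vector field of the profile system `P' = a Q`, `Q' = f(P) - c a Q + a Q² / P` at
`z = (P, Q)`; the system of the theorem has `a = 2 / k²` and `c = s μ`. -/
noncomputable def profileField (a c : ℝ) (f : ℝ → ℝ) (z : ℝ × ℝ) : ℝ × ℝ :=
  (a * z.2, f z.1 - c * a * z.2 + a * z.2 ^ 2 / z.1)

/-- The energy `F(P) - (a / 2) Q²`, a first integral of `P' = a Q`, `Q' = F'(P)`. It differs from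
the energy `H` of the paper by the additive constant `F(P⁻)`. -/
noncomputable def energy (a : ℝ) (F : ℝ → ℝ) (z : ℝ × ℝ) : ℝ :=
  F z.1 - a / 2 * z.2 ^ 2

/-- The part of the sector `|Q| ≤ c P` over `[p₀, p₁]`, where the energy increases along solutions
of the profile system. -/
def truncatedSector (c p₀ p₁ : ℝ) : Set (ℝ × ℝ) :=
  {z | z.1 ∈ Icc p₀ p₁ ∧ |z.2| ≤ c * z.1}

/-- The part of the superlevel set of the energy through `(p₁, 0)` lying over `(0, p₁)`. -/
def trappingRegion (a : ℝ) (F : ℝ → ℝ) (p₁ : ℝ) : Set (ℝ × ℝ) :=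
  {z | z.1 ∈ Ioo 0 p₁ ∧ F p₁ < energy a F z}

variable {a c p₀ p₁ : ℝ} {f F : ℝ → ℝ}

lemma contDiffOn_profileField (hf : ContDiffOn ℝ 1 f (Ioi 0)) :
    ContDiffOn ℝ 1 (profileField a c f) {z | 0 < z.1} := by
  have hfst : ContDiffOn ℝ 1 (fun z : ℝ × ℝ => f z.1) {z | 0 < z.1} :=
    hf.comp contDiffOn_fst fun _ hz => hz
  exact (contDiffOn_const.mul contDiffOn_snd).prodMk
    ((hfst.sub (contDiffOn_const.mul contDiffOn_snd)).add
      ((contDiffOn_const.mul (contDiffOn_snd.pow 2)).div contDiffOn_fst fun _ hz => ne_of_gt hz))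

lemma continuousOn_energy (hF : ContinuousOn F (Ioi 0)) :
    ContinuousOn (energy a F) {z | 0 < z.1} :=
  (hF.comp continuousOn_fst fun _ hz => hz).sub (by fun_prop)

lemma truncatedSector_subset_Icc (hc : 0 ≤ c) :
    truncatedSector c p₀ p₁ ⊆ Icc (p₀, -(c * p₁)) (p₁, c * p₁) := fun _ ⟨hz₁, hz₂⟩ =>
  have h := abs_le.1 (hz₂.trans (mul_le_mul_of_nonneg_left hz₁.2 hc))
  ⟨⟨hz₁.1, h.1⟩, ⟨hz₁.2, h.2⟩⟩

lemma isCompact_truncatedSector (hc : 0 ≤ c) : IsCompact (truncatedSector c p₀ p₁) :=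
  isCompact_Icc.of_isClosed_subset
    ((isClosed_Icc.preimage continuous_fst).inter
      (isClosed_le (continuous_abs.comp continuous_snd) (continuous_const.mul continuous_fst)))
    (truncatedSector_subset_Icc hc)

lemma fst_pos_of_mem_truncatedSector (hp₀ : 0 < p₀) {z : ℝ × ℝ}
    (hz : z ∈ truncatedSector c p₀ p₁) : 0 < z.1 :=
  hp₀.trans_le hz.1.1

lemma isOpen_trappingRegion (hF : ContinuousOn F (Ioi 0)) : IsOpen (trappingRegion a F p₁) := by
  have h : trappingRegion a F p₁ =
      ({z | 0 < z.1} ∩ energy a F ⁻¹' Ioi (F p₁)) ∩ {z | z.1 < p₁} := by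
    ext z
    simp only [trappingRegion, mem_Ioo, mem_ofPred_eq, mem_inter_iff, mem_preimage, mem_Ioi]
    tauto
  rw [h]
  exact ((continuousOn_energy hF).isOpen_inter_preimage (isOpen_lt continuous_const continuous_fst)
    isOpen_Ioi).inter (isOpen_lt continuous_fst continuous_const)

lemma trappingRegion_subset_truncatedSector (ha : 0 < a) (hc : 0 ≤ c)
    (hlow : ∀ P ∈ Ioo 0 p₀, F P ≤ F p₁)
    (hline : ∀ P ∈ Ioo 0 p₁, F P - F p₁ ≤ a / 2 * (c * P) ^ 2) :
    trappingRegion a F p₁ ⊆ truncatedSector c p₀ p₁ := by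
  rintro ⟨P, Q⟩ ⟨hP, hE⟩
  simp only [energy] at hP hE
  have hQ : 0 ≤ a / 2 * Q ^ 2 := by positivity
  have hp₀ : p₀ ≤ P := not_lt.1 fun h => by linarith [hlow P ⟨hP.1, h⟩]
  have hsq : Q ^ 2 ≤ (c * P) ^ 2 :=
    le_of_mul_le_mul_left (by linarith [hline P hP]) (half_pos ha)
  exact ⟨⟨hp₀, hP.2.le⟩, abs_le_of_sq_le_sq hsq (mul_nonneg hc hP.1.le)⟩

lemma mem_closure_trappingRegion (hp₁ : 0 < p₁) (hF : ∀ᶠ P in 𝓝[<] p₁, F p₁ < F P) :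
    (p₁, 0) ∈ closure (trappingRegion a F p₁) := by
  have hlim : Tendsto (fun P : ℝ => (P, (0 : ℝ))) (𝓝[<] p₁) (𝓝 (p₁, 0)) :=
    (tendsto_id.mono_left nhdsWithin_le_nhds).prodMk_nhds tendsto_const_nhds
  refine mem_closure_of_tendsto hlim ?_
  filter_upwards [hF, Ioo_mem_nhdsLT hp₁] with P hFP hP
  exact ⟨hP, by simpa [energy] using hFP⟩

variable {u : ℝ → ℝ × ℝ}

lemma hasDerivAt_energy {t : ℝ} (hu : HasDerivAt u (profileField a c f (u t)) t)
    (hP : (u t).1 ≠ 0) (hF : HasDerivAt F (f (u t).1) (u t).1) :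
    HasDerivAt (fun t => energy a F (u t))
      (a ^ 2 * (u t).2 ^ 2 * (c - (u t).2 / (u t).1)) t := by
  have hP' : HasDerivAt (fun t => (u t).1) (a * (u t).2) t := hu.fst
  have hQ' : HasDerivAt (fun t => (u t).2)
    (f (u t).1 - c * a * (u t).2 + a * (u t).2 ^ 2 / (u t).1) t := hu.snd
  refine ((hF.comp t hP').sub ((hQ'.pow 2).const_mul (a / 2))).congr_deriv ?_
  simp only [Nat.cast_ofNat, Nat.add_one_sub_one, pow_one]
  field_simp
  ring

lemma monotoneOn_energy (hp₀ : 0 < p₀) (hF : ∀ P > 0, HasDerivAt F (f P) P) {D : Set ℝ}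
    (hD : Convex ℝ D) (hu : ∀ t ∈ D, HasDerivAt u (profileField a c f (u t)) t)
    (huS : ∀ t ∈ D, u t ∈ truncatedSector c p₀ p₁) :
    MonotoneOn (fun t => energy a F (u t)) D := by
  have hpos (t : ℝ) (ht : t ∈ D) : 0 < (u t).1 := fst_pos_of_mem_truncatedSector hp₀ (huS t ht)
  have hE (t : ℝ) (ht : t ∈ D) :=
    hasDerivAt_energy (hu t ht) (hpos t ht).ne' (hF _ (hpos t ht))
  refine monotoneOn_of_hasDerivWithinAt_nonneg hD
    (fun t ht => (hE t ht).continuousAt.continuousWithinAt)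
    (fun t ht => (hE t (interior_subset ht)).hasDerivWithinAt) fun t ht => ?_
  have htD := interior_subset ht
  have hslope : (u t).2 / (u t).1 ≤ c :=
    (div_le_iff₀ (hpos t htD)).2 ((le_abs_self _).trans (huS t htD).2)
  exact mul_nonneg (by positivity) (sub_nonneg.2 hslope)

lemma not_bddAbove_range_of_le_deriv {g g' : ℝ → ℝ} (hg : ∀ t, HasDerivAt g (g' t) t) {C : ℝ}
    (hC : 0 < C) (hg' : ∀ t, C ≤ g' t) : ¬BddAbove (range g) := by
  rintro ⟨B, hB⟩
  have hT : 0 ≤ (B - g 0 + 1) / C := by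
    have := hB (mem_range_self 0)
    exact div_nonneg (by linarith) hC.le
  have hgrowth := mul_sub_le_image_sub_of_le_deriv (fun t => (hg t).differentiableAt)
    (fun t => (hg t).deriv ▸ hg' t) hT
  rw [sub_zero, mul_div_cancel₀ _ hC.ne'] at hgrowth
  linarith [hB (mem_range_self ((B - g 0 + 1) / C))]

lemma snd_eq_zero_of_energy_const (ha : 0 < a) (hc : 0 < c) (hp₀ : 0 < p₀)
    (hF : ∀ P > 0, HasDerivAt F (f P) P) (hu : IsIntegralCurve u fun _ => profileField a c f)
    (huS : ∀ t, u t ∈ truncatedSector c p₀ p₁) {h : ℝ} (hE : ∀ t, energy a F (u t) = h) (t : ℝ) :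
    (u t).2 = 0 := by
  have hpos (t : ℝ) : 0 < (u t).1 := fst_pos_of_mem_truncatedSector hp₀ (huS t)
  have hslope (t : ℝ) : (u t).2 / (u t).1 ∈ ({0, c} : Set ℝ) := by
    have hE' : HasDerivAt (fun t => energy a F (u t)) 0 t := by
      simpa only [hE] using hasDerivAt_const t h
    have := (hasDerivAt_energy (hu t) (hpos t).ne' (hF _ (hpos t))).unique hE'
    simpa [ha.ne', (hpos t).ne', sub_eq_zero, eq_comm] using this
  have hcont : Continuous fun t => (u t).2 / (u t).1 :=
    (continuous_snd.comp hu.continuous).div (continuous_fst.comp hu.continuous)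
      fun t => (hpos t).ne'
  obtain ⟨r, hr, hur⟩ := isPreconnected_univ.eqOn_const_of_mapsTo
    (toFinite {0, c}).isDiscrete hcont.continuousOn (fun t _ => hslope t) (insert_nonempty _ _)
  have hline (t : ℝ) : (u t).2 = r * (u t).1 := (div_eq_iff (hpos t).ne').1 (hur (mem_univ t))
  rcases hr with rfl | rfl
  · rw [hline, zero_mul]
  · have hP' (t : ℝ) : HasDerivAt (fun t => (u t).1) (a * (u t).2) t := (hu t).fst
    have hP'_ge (t : ℝ) : a * (r * p₀) ≤ a * (u t).2 := by
      rw [hline]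
      gcongr
      exact (huS t).1.1
    exact absurd ⟨p₁, forall_mem_range.2 fun t => (huS t).1.2⟩
      (not_bddAbove_range_of_le_deriv hP' (by positivity) hP'_ge)

lemma equilibrium_of_energy_const (ha : 0 < a) (hc : 0 < c) (hp₀ : 0 < p₀)
    (hF : ∀ P > 0, HasDerivAt F (f P) P) (hu : IsIntegralCurve u fun _ => profileField a c f)
    (huS : ∀ t, u t ∈ truncatedSector c p₀ p₁) {h : ℝ} (hE : ∀ t, energy a F (u t) = h) (t : ℝ) :
    (u t).2 = 0 ∧ f (u t).1 = 0 := by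
  have hQ := snd_eq_zero_of_energy_const ha hc hp₀ hF hu huS hE
  have hQ' : HasDerivAt (fun t => (u t).2) 0 t := by
    simpa only [hQ] using hasDerivAt_const t (0 : ℝ)
  have hQ'' : HasDerivAt (fun t => (u t).2) (profileField a c f (u t)).2 t := (hu t).snd
  exact ⟨hQ t, by simpa [profileField, hQ t] using hQ''.unique hQ'⟩

variable {φ : Flow ℝ (ℝ × ℝ)}

lemma isForwardInvariant_trappingRegion (hc : 0 ≤ c) (ha : 0 ≤ a) (hp₀ : 0 < p₀)
    (hF : ∀ P > 0, HasDerivAt F (f P) P)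
    (hφ : ∀ x t, φ t x ∈ truncatedSector c p₀ p₁ →
      HasDerivAt (fun t => φ t x) (profileField a c f (φ t x)) t)
    (hR : trappingRegion a F p₁ ⊆ truncatedSector c p₀ p₁) :
    IsForwardInvariant φ (trappingRegion a F p₁) := by
  have hFcont : ContinuousOn F (Ioi 0) := fun P hP => (hF P hP).continuousAt.continuousWithinAt
  intro t ht x hx
  have hcont : Continuous fun t => φ t x := by fun_prop
  refine forall_nonneg_mem_of_forall_Ico_mem hcont (isOpen_trappingRegion hFcont)
    (by simpa using hx) (fun τ hτ hbefore => ?_) ht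
  have hsector : ∀ t ∈ Icc 0 τ, φ t x ∈ truncatedSector c p₀ p₁ := by
    rw [← closure_Ico hτ.ne]
    exact closure_minimal (fun t ht => hR (hbefore t ht))
      ((isCompact_truncatedSector hc).isClosed.preimage hcont)
  have hmono := monotoneOn_energy hp₀ hF (convex_Icc 0 τ) (fun t ht => hφ x t (hsector t ht))
    hsector (left_mem_Icc.2 hτ.le) (right_mem_Icc.2 hτ.le) hτ.le
  have hE : F p₁ < energy a F (φ τ x) := hx.2.trans_le (by simpa using hmono)
  have hτS := hsector τ (right_mem_Icc.2 hτ.le)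
  refine ⟨⟨fst_pos_of_mem_truncatedSector hp₀ hτS, hτS.1.2.lt_of_ne fun h => hE.not_ge ?_⟩, hE⟩
  rw [energy, h]
  exact sub_le_self _ (by positivity)

theorem exists_heteroclinic_of_trappingRegion_subset (ha : 0 < a) (hc : 0 < c) (hp₀ : 0 < p₀)
    (hf : ContDiffOn ℝ 1 f (Ioi 0)) (hF : ∀ P > 0, HasDerivAt F (f P) P)
    (hR : trappingRegion a F p₁ ⊆ truncatedSector c p₀ p₁)
    (hp₁ : (p₁, 0) ∈ closure (trappingRegion a F p₁)) (hfp₁ : f p₁ = 0) {p : ℝ} (hp : F p₁ < F p)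
    (hroots : ∀ P ∈ Icc p₀ p₁, f P = 0 → P = p₁ ∨ P = p) :
    ∃ u : ℝ → ℝ × ℝ, (∀ t, 0 < (u t).1) ∧ IsIntegralCurve u (fun _ => profileField a c f) ∧
      Tendsto u atBot (𝓝 (p₁, 0)) ∧ Tendsto u atTop (𝓝 (p, 0)) := by
  have hRS : closure (trappingRegion a F p₁) ⊆ truncatedSector c p₀ p₁ :=
    closure_minimal hR (isCompact_truncatedSector hc.le).isClosed
  have hSIcc : truncatedSector c p₀ p₁ ⊆ Icc (p₀, -(c * p₁)) (p₁, c * p₁) :=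
    truncatedSector_subset_Icc hc.le
  have hp₁S : (p₁, 0) ∈ truncatedSector c p₀ p₁ := hRS hp₁
  obtain ⟨φ, hφ, hφ₀⟩ := exists_flow_hasDerivAt_of_contDiffOn_Icc
    ((hSIcc hp₁S).1.trans (hSIcc hp₁S).2)
    ((contDiffOn_profileField (a := a) (c := c) hf).mono fun z hz => hp₀.trans_le hz.1.1)
  have hφS (x : ℝ × ℝ) (t : ℝ) (hx : φ t x ∈ truncatedSector c p₀ p₁) :=
    hφ x t (hSIcc hx)
  have hinv : IsForwardInvariant φ (closure (trappingRegion a F p₁)) := fun t ht =>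
    (isForwardInvariant_trappingRegion hc.le ha.le hp₀ hF hφS hR ht).closure (by fun_prop)
  have hEcont : ContinuousOn (energy a F) (closure (trappingRegion a F p₁)) :=
    (continuousOn_energy fun P hP => (hF P hP).continuousAt.continuousWithinAt).mono
      fun z hz => fst_pos_of_mem_truncatedSector hp₀ (hRS hz)
  have hmono : ∀ x ∈ closure (trappingRegion a F p₁), ∀ t ≥ 0,
      energy a F x ≤ energy a F (φ t x) := fun x hx t ht => by
    have hsector : ∀ t ∈ Ici (0 : ℝ), φ t x ∈ truncatedSector c p₀ p₁ :=
      fun t ht => hRS (hinv ht hx)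
    simpa using monotoneOn_energy hp₀ hF (convex_Ici 0) (fun t ht => hφS x t (hsector t ht))
      hsector (mem_Ici.2 le_rfl) (mem_Ici.2 ht) ht
  have hRH : trappingRegion a F p₁ ⊆
      closure (trappingRegion a F p₁) ∩ {z | energy a F (p₁, 0) < energy a F z} :=
    fun z hz => ⟨subset_closure hz, by simpa [energy] using hz.2⟩
  obtain ⟨y, hyS, hbot, htop⟩ := exists_heteroclinic_of_lyapunov
    ((isCompact_truncatedSector hc.le).of_isClosed_subset isClosed_closure hRS) hinv hEcont hmono
    (z₀ := (p₁, 0)) (z₁ := (p, 0)) (hφ₀ _ (hSIcc hp₁S) (by simp [profileField, hfp₁]))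
    (closure_mono hRH hp₁)
    (by simpa [energy] using hp) fun w hwS hwE => by
      obtain ⟨hQ, hfP⟩ := equilibrium_of_energy_const ha hc hp₀ hF
        (fun t => hφS w t (hRS (hwS t))) (fun t => hRS (hwS t)) hwE 0
      simp only [φ.map_zero_apply] at hQ hfP
      have hwP : w.1 ∈ Icc p₀ p₁ := by simpa using (hRS (hwS 0)).1
      exact (hroots _ hwP hfP).imp (Prod.ext · hQ) (Prod.ext · hQ)
  exact ⟨fun t => φ t y, fun t => fst_pos_of_mem_truncatedSector hp₀ (hRS (hyS t)),
    fun t => hφS y t (hRS (hyS t)), hbot, htop⟩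

lemma sub_le_mul_sq_of_antitoneOn {p q m b : ℝ} (hb : 0 ≤ b) (hp : 0 < p)
    (hFcont : ContinuousAt F p) (hanti : AntitoneOn F (Icc p q))
    (hline : ∀ P ∈ Ioo 0 p, F P - m ≤ b * P ^ 2) : ∀ P ∈ Ioc 0 q, F P - m ≤ b * P ^ 2 := by
  have hline_p : F p - m ≤ b * p ^ 2 := by
    have hrhs : ContinuousAt (fun P : ℝ => b * P ^ 2) p := by fun_prop
    exact le_of_tendsto_of_tendsto ((hFcont.sub continuousAt_const).tendsto.mono_left
      nhdsWithin_le_nhds) (hrhs.tendsto.mono_left nhdsWithin_le_nhds)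
      (eventually_of_mem (Ioo_mem_nhdsLT hp) hline)
  intro P hP
  rcases lt_or_ge P p with hPp | hPp
  · exact hline P ⟨hP.1, hPp⟩
  · calc F P - m ≤ F p - m := sub_le_sub_right (hanti ⟨le_rfl, hPp.trans hP.2⟩ ⟨hPp, hP.2⟩ hPp) m
      _ ≤ b * p ^ 2 := hline_p
      _ ≤ b * P ^ 2 := by gcongr

theorem exists_heteroclinic_profile {Pp Pm : ℝ} (ha : 0 < a) (hc : 0 < c) (hPp : 0 < Pp)
    (hPpPm : Pp < Pm) (hf : ContDiffOn ℝ 1 f (Ioi 0)) (hF : ∀ P > 0, HasDerivAt F (f P) P)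
    (hfPm : f Pm = 0) (hneg : ∀ P ∈ Ioo Pp Pm, f P < 0) (hne : ∀ P ∈ Ioo 0 Pp, f P ≠ 0)
    (hlow : ∀ᶠ P in 𝓝[>] 0, F P ≤ F Pm)
    (hline : ∀ P ∈ Ioo 0 Pp, F P - F Pm ≤ a / 2 * c ^ 2 * P ^ 2) :
    ∃ u : ℝ → ℝ × ℝ, (∀ t, 0 < (u t).1) ∧ IsIntegralCurve u (fun _ => profileField a c f) ∧
      Tendsto u atBot (𝓝 (Pm, 0)) ∧ Tendsto u atTop (𝓝 (Pp, 0)) := by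
  have hanti : StrictAntiOn F (Icc Pp Pm) :=
    strictAntiOn_of_hasDerivWithinAt_neg (convex_Icc Pp Pm)
      (fun P hP => (hF P (hPp.trans_le hP.1)).continuousAt.continuousWithinAt)
      (fun P hP => (hF P (hPp.trans_le (interior_subset hP).1)).hasDerivWithinAt)
      (by rwa [interior_Icc])
  have hline' := sub_le_mul_sq_of_antitoneOn (by positivity) hPp (hF Pp hPp).continuousAt
    hanti.antitoneOn hline
  obtain ⟨p₀, hp₀, hlow'⟩ := mem_nhdsGT_iff_exists_Ioo_subset.1 hlow
  have hhigh : ∀ᶠ P in 𝓝[<] Pm, F Pm < F P := by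
    filter_upwards [Ioo_mem_nhdsLT hPpPm] with P hP
    exact hanti (Ioo_subset_Icc_self hP) (right_mem_Icc.2 hPpPm.le) hP.2
  refine exists_heteroclinic_of_trappingRegion_subset ha hc hp₀ hf hF
    (trappingRegion_subset_truncatedSector ha hc.le hlow' fun P hP => ?_)
    (mem_closure_trappingRegion (hPp.trans hPpPm) hhigh) hfPm
    (hanti (left_mem_Icc.2 hPpPm.le) (right_mem_Icc.2 hPpPm.le) hPpPm) fun P hP hfP => ?_
  · simpa only [mul_pow, mul_assoc] using hline' P (Ioo_subset_Ioc_self hP)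
  · by_contra! hPne
    rcases hPne.2.lt_or_gt with hlt | hgt
    · exact hne P ⟨hp₀.trans_le hP.1, hlt⟩ hfP
    · exact (hneg P ⟨hgt, hP.2.lt_of_ne hPne.1⟩).ne hfP

end PhasePlane

section PowerLaw

/-- The nonlinearity `f(P) = P ^ γ - C₁ + C₂ / P` of the profile equation. -/
noncomputable def profileForce (γ C₁ C₂ P : ℝ) : ℝ :=
  P ^ γ - C₁ + C₂ / P

/-- The antiderivative of `profileForce` on `(0, ∞)` entering the energy. -/
noncomputable def profilePotential (γ C₁ C₂ P : ℝ) : ℝ :=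
  P ^ (γ + 1) / (γ + 1) - C₁ * P + C₂ * Real.log P

variable {γ C₁ C₂ : ℝ}

lemma hasDerivAt_profilePotential (hγ : γ + 1 ≠ 0) {P : ℝ} (hP : 0 < P) :
    HasDerivAt (profilePotential γ C₁ C₂) (profileForce γ C₁ C₂ P) P := by
  have hpow := (Real.hasDerivAt_rpow_const (p := γ + 1) (Or.inl hP.ne')).div_const (γ + 1)
  refine ((hpow.sub ((hasDerivAt_id P).const_mul C₁)).add
    ((Real.hasDerivAt_log hP.ne').const_mul C₂)).congr_deriv ?_
  rw [profileForce, add_sub_cancel_right]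
  field_simp

lemma contDiffOn_profileForce : ContDiffOn ℝ 1 (profileForce γ C₁ C₂) (Ioi 0) := fun P hP =>
  have hP' : P ≠ 0 := (mem_Ioi.1 hP).ne'
  (((Real.contDiffAt_rpow_const_of_ne hP').sub contDiffAt_const).add
    (contDiffAt_const.div contDiffAt_id hP')).contDiffWithinAt

lemma tendsto_profilePotential_nhdsGT_zero (hγ : 0 ≤ γ + 1) (hC₂ : 0 < C₂) :
    Tendsto (profilePotential γ C₁ C₂) (𝓝[>] 0) atBot := by
  have hcont : ContinuousAt (fun P : ℝ => P ^ (γ + 1) / (γ + 1) - C₁ * P) 0 :=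
    ((Real.continuousAt_rpow_const 0 (γ + 1) (Or.inr hγ)).div_const _).sub (by fun_prop)
  exact (hcont.tendsto.mono_left nhdsWithin_le_nhds).add_atBot
    (Real.tendsto_log_nhdsGT_zero.const_mul_atBot hC₂)

lemma self_mul_profileForce {P : ℝ} (hP : 0 < P) :
    P * profileForce γ C₁ C₂ P = P ^ (γ + 1) - C₁ * P + C₂ := by
  rw [profileForce, Real.rpow_add hP, Real.rpow_one]
  field_simp

lemma strictConvexOn_self_mul_profileForce (hγ : 0 < γ) :
    StrictConvexOn ℝ (Ioi 0) fun P => P * profileForce γ C₁ C₂ P := by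
  have hpow : StrictConvexOn ℝ (Ioi 0) fun P : ℝ => P ^ (γ + 1) :=
    (strictConvexOn_rpow (by linarith)).subset Ioi_subset_Ici_self (convex_Ioi 0)
  have hlin : ConvexOn ℝ (Ioi 0) fun P : ℝ => C₂ - C₁ * P :=
    (convexOn_const C₂ (convex_Ioi 0)).sub ((LinearMap.mul ℝ ℝ C₁).concaveOn (convex_Ioi 0))
  exact (hpow.add_convexOn hlin).congr fun P hP => by
    rw [self_mul_profileForce hP, Pi.add_apply]
    ring

lemma profileForce_neg_of_mem_Ioo (hγ : 0 < γ) {p q : ℝ} (hp : 0 < p)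
    (hfp : profileForce γ C₁ C₂ p = 0) (hfq : profileForce γ C₁ C₂ q = 0) {P : ℝ}
    (hP : P ∈ Ioo p q) : profileForce γ C₁ C₂ P < 0 := by
  have hpq : p < q := hP.1.trans hP.2
  have h := (strictConvexOn_self_mul_profileForce (C₁ := C₁) (C₂ := C₂) hγ).lt_on_openSegment
    hp (hp.trans hpq) hpq.ne (by rwa [openSegment_eq_Ioo hpq])
  simp only [hfp, hfq, mul_zero, max_self] at h
  exact neg_of_mul_neg_right h (hp.trans hP.1).le

lemma pos_of_profileForce_eq_zero (hγ : 0 < γ) {p q : ℝ} (hp : 0 < p) (hpq : p < q)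
    (hfp : profileForce γ C₁ C₂ p = 0) (hfq : profileForce γ C₁ C₂ q = 0) : 0 < C₂ := by
  have hpow : p ^ γ < q ^ γ := Real.rpow_lt_rpow hp.le hpq hγ
  have hdiv : C₂ / q < C₂ / p := by
    unfold profileForce at hfp hfq
    linarith
  by_contra! hC₂
  exact hdiv.not_ge (by simpa [neg_div] using
    div_le_div_of_nonneg_left (neg_nonneg.2 hC₂) hp hpq.le)

end PowerLaw

end TravelingWave

open TravelingWave in
theorem stmt_9_general (γ s μ k Pp Pm C₁ C₂ : ℝ) (hγ : 0 < γ) (hs : 0 < s) (hμ : 0 < μ)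
    (hk : 0 < k) (hPp : 0 < Pp) (hPpPm : Pp < Pm) (f F : ℝ → ℝ)
    (hf : ∀ P : ℝ, f P = P ^ γ - C₁ + C₂ / P)
    (hroot1 : f Pp = 0) (hroot2 : f Pm = 0)
    (hF : ∀ P : ℝ, F P = P ^ (γ + 1) / (γ + 1) - C₁ * P + C₂ * Real.log P)
    (hF₁ : ∀ P : ℝ, 0 < P → P < Pp → F P - (s * μ * P / k) ^ 2 - F Pm ≤ 0) :
    ∃ P Q : ℝ → ℝ,
      (∀ y : ℝ, 0 < P y) ∧
      (∀ y : ℝ, HasDerivAt P (2 / k ^ 2 * Q y) y) ∧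
      (∀ y : ℝ, HasDerivAt Q
        (f (P y) - 2 * μ * s / k ^ 2 * Q y + 2 / k ^ 2 * (Q y) ^ 2 / P y) y) ∧
      Tendsto (fun y => (P y, Q y)) atBot (𝓝 (Pm, 0)) ∧
      Tendsto (fun y => (P y, Q y)) atTop (𝓝 (Pp, 0)) := by
  obtain rfl : f = profileForce γ C₁ C₂ := funext hf
  obtain rfl : F = profilePotential γ C₁ C₂ := funext hF
  have hC₂ : 0 < C₂ := pos_of_profileForce_eq_zero hγ hPp hPpPm hroot1 hroot2
  have hlow := (tendsto_profilePotential_nhdsGT_zero (γ := γ) (C₁ := C₁) (by linarith)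
    hC₂).eventually_le_atBot (profilePotential γ C₁ C₂ Pm)
  obtain ⟨u, hpos, hu, hbot, htop⟩ := exists_heteroclinic_profile (a := 2 / k ^ 2) (c := s * μ)
    (by positivity) (by positivity) hPp hPpPm contDiffOn_profileForce
    (fun P hP => hasDerivAt_profilePotential (by linarith) hP) hroot2
    (fun P hP => profileForce_neg_of_mem_Ioo hγ hPp hroot1 hroot2 hP)
    (fun P hP hfP =>
      (profileForce_neg_of_mem_Ioo hγ hP.1 hfP hroot2 ⟨hP.2, hPpPm⟩).ne hroot1)
    hlow fun P hP => by
      have hsq : (s * μ * P / k) ^ 2 = 2 / k ^ 2 / 2 * (s * μ) ^ 2 * P ^ 2 := by field_simp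
      linarith [hF₁ P hP.1 hP.2]
  refine ⟨fun y => (u y).1, fun y => (u y).2, hpos, fun y => (hu y).fst, fun y => ?_, hbot, htop⟩
  have hQ : HasDerivAt (fun y => (u y).2) _ y := (hu y).snd
  exact hQ.congr_deriv (by simp only [profileField]; ring)

/-- global (large-amplitude) existence of traveling wave profiles for `s > 0`:
if the restriction `F₁(P) = F(P) − (sμP/k)² − F(P⁻)` of the energy to the line `Q̃ = sμP` is
nonpositive on `(0, P⁺)`, then the profile system `P' = (2/k²)Q̃`,
`Q̃' = f(P) − (2μs/k²)Q̃ + (2/k²)Q̃²/P` has a heteroclinic from `(P⁻,0)` to `(P⁺,0)`. -/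
theorem stmt_9 (γ s μ k Pp Pm C₁ C₂ : ℝ) (hγ : 1 ≤ γ) (hs : 0 < s) (hμ : 0 < μ) (hk : 0 < k)
    (hPp : 0 < Pp) (hPpPm : Pp < Pm)
    (hC₁ : C₁ = (Pp ^ (γ + 1) - Pm ^ (γ + 1)) / (Pp - Pm))
    (hC₂ : C₂ = Pp * Pm * ((Pp ^ γ - Pm ^ γ) / (Pp - Pm)))
    (f F : ℝ → ℝ)
    (hf : ∀ P : ℝ, f P = P ^ γ - C₁ + C₂ / P)
    (hroot1 : f Pp = 0) (hroot2 : f Pm = 0)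
    (hF : ∀ P : ℝ, F P = P ^ (γ + 1) / (γ + 1) - C₁ * P + C₂ * Real.log P)
    (hF₁ : ∀ P : ℝ, 0 < P → P < Pp → F P - (s * μ * P / k) ^ 2 - F Pm ≤ 0) :
    ∃ P Q : ℝ → ℝ,
      (∀ y : ℝ, 0 < P y) ∧
      (∀ y : ℝ, HasDerivAt P (2 / k ^ 2 * Q y) y) ∧
      (∀ y : ℝ, HasDerivAt Q
        (f (P y) - 2 * μ * s / k ^ 2 * Q y + 2 / k ^ 2 * (Q y) ^ 2 / P y) y) ∧
      Tendsto (fun y => (P y, Q y)) atBot (𝓝 (Pm, 0)) ∧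
      Tendsto (fun y => (P y, Q y)) atTop (𝓝 (Pp, 0)) :=
  stmt_9_general γ s μ k Pp Pm C₁ C₂ (one_pos.trans_le hγ) hs hμ hk hPp hPpPm f F hf
    hroot1 hroot2 hF hF₁
end
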